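/- Let d > 0 and p > 0, and let f ∈ C¹(Ω)∩C(Ω̄), f not identically zero, be such that the problem −Δφ = f in Ω, φ ≥ 0 in Ω, φ = 0 on ∂Ω has a classical solution φ ∈ C(Ω̄)∩C²(Ω). Assume also that Ω admits a torsion function ξ. Then there exists a positive number λ_f such that for every λ ∈ (0, λ_f) the Carrier problem −(1 + d‖u‖_2²) Δu = u^p + λ f(x) in Ω, u > 0 in Ω, u = 0 on ∂Ω has at least one classical solution. -/

import Mathlib

open MeasureTheory Set Real
open scoped ENNReal NNReal

noncomputable section

/-- The Laplacian of `u : ℝ^N → ℝ`, as the sum of second partial derivatives. -/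
def lapl {N : ℕ} (u : EuclideanSpace ℝ (Fin N) → ℝ) (x : EuclideanSpace ℝ (Fin N)) : ℝ :=
  ∑ i : Fin N, fderiv ℝ (fun y => fderiv ℝ u y (EuclideanSpace.single i 1)) x
    (EuclideanSpace.single i 1)

/-- The `L^p` norm of `u` on `Ω`. -/
def LpNorm {N : ℕ} (Ω : Set (EuclideanSpace ℝ (Fin N))) (p : ℝ≥0∞)
    (u : EuclideanSpace ℝ (Fin N) → ℝ) : ℝ :=
  (eLpNorm u p (volume.restrict Ω)).toReal

/-- The `L²` norm of the gradient of `u` on `Ω`. -/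
def gradNorm2 {N : ℕ} (Ω : Set (EuclideanSpace ℝ (Fin N)))
    (u : EuclideanSpace ℝ (Fin N) → ℝ) : ℝ :=
  (eLpNorm (fun x => gradient u x) 2 (volume.restrict Ω)).toReal

/-- A torsion function of `Ω`: `ξ ∈ C(Ω̄) ∩ C²(Ω)`, `ξ ≥ 0` in `Ω`, `-Δξ = 1` in `Ω`,
`ξ = 0` on `∂Ω`. -/
def IsTorsionFn {N : ℕ} (Ω : Set (EuclideanSpace ℝ (Fin N)))
    (ξ : EuclideanSpace ℝ (Fin N) → ℝ) : Prop :=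
  ContinuousOn ξ (closure Ω) ∧ ContDiffOn ℝ 2 ξ Ω ∧ (∀ x ∈ Ω, 0 ≤ ξ x) ∧
    (∀ x ∈ Ω, -lapl ξ x = 1) ∧ (∀ x ∈ frontier Ω, ξ x = 0)

open Filter Topology

/-- Euclidean space. -/
abbrev RN (N : ℕ) := EuclideanSpace ℝ (Fin N)

/-- Directional derivative along the `i`-th coordinate. -/
def pd {N : ℕ} (i : Fin N) (u : RN N → ℝ) (x : RN N) : ℝ :=
  fderiv ℝ u x (EuclideanSpace.single i 1)

lemma lapl_eq {N : ℕ} (u : RN N → ℝ) (x : RN N) : lapl u x = ∑ i, pd i (pd i u) x := rfl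

lemma pd_congr {N : ℕ} {i : Fin N} {u v : RN N → ℝ} {x : RN N} (h : u =ᶠ[𝓝 x] v) :
    pd i u =ᶠ[𝓝 x] pd i v := by
  filter_upwards [h.fderiv (𝕜 := ℝ)] with y hy
  simp [pd, hy]

lemma lapl_congr {N : ℕ} {u v : RN N → ℝ} {x : RN N} (h : u =ᶠ[𝓝 x] v) :
    lapl u x = lapl v x := by
  rw [lapl_eq, lapl_eq]
  exact Finset.sum_congr rfl fun i _ => (pd_congr (pd_congr h)).eq_of_nhds

lemma pd_contDiffAt {N : ℕ} {i : Fin N} {u : RN N → ℝ} {x : RN N} (h : ContDiffAt ℝ 2 u x) :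
    ContDiffAt ℝ 1 (pd i u) x := by
  have : ContDiffAt ℝ 1 (fderiv ℝ u) x := h.fderiv_right (by norm_num)
  exact this.clm_apply contDiffAt_const

lemma pd_continuousAt {N : ℕ} {i : Fin N} {u : RN N → ℝ} {x : RN N} (h : ContDiffAt ℝ 1 u x) :
    ContinuousAt (pd i u) x := by
  have : ContDiffAt ℝ 0 (fderiv ℝ u) x := h.fderiv_right (by norm_num)
  exact (this.clm_apply contDiffAt_const).continuousAt

lemma lapl_continuousAt {N : ℕ} {u : RN N → ℝ} {x : RN N} (h : ContDiffAt ℝ 2 u x) :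
    ContinuousAt (lapl u) x := by
  have : lapl u = fun x => ∑ i, pd i (pd i u) x := by ext; rfl
  rw [this]
  exact tendsto_finsetSum _ fun i _ => (pd_continuousAt (pd_contDiffAt h))

lemma ContDiffAt.eventually_diff {N : ℕ} {u : RN N → ℝ} {x : RN N} (h : ContDiffAt ℝ 2 u x) :
    ∀ᶠ y in 𝓝 x, DifferentiableAt ℝ u y := by
  filter_upwards [h.eventually (by simp)] with y hy
  exact hy.differentiableAt (by norm_num)

lemma lapl_add {N : ℕ} {u v : RN N → ℝ} {x : RN N} (hu : ContDiffAt ℝ 2 u x)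
    (hv : ContDiffAt ℝ 2 v x) : lapl (fun y => u y + v y) x = lapl u x + lapl v x := by
  rw [lapl_eq, lapl_eq, lapl_eq, ← Finset.sum_add_distrib]
  refine Finset.sum_congr rfl fun i _ => ?_
  have h1 : pd i (fun y => u y + v y) =ᶠ[𝓝 x] fun y => pd i u y + pd i v y := by
    filter_upwards [hu.eventually_diff, hv.eventually_diff] with y h1 h2
    simp [pd, fderiv_fun_add h1 h2]
  rw [(pd_congr h1).eq_of_nhds]
  have a := (pd_contDiffAt (i := i) hu).differentiableAt (by norm_num)
  have b := (pd_contDiffAt (i := i) hv).differentiableAt (by norm_num)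
  rw [pd, fderiv_fun_add a b]; simp [pd]

lemma lapl_const_mul {N : ℕ} {u : RN N → ℝ} {x : RN N} (hu : ContDiffAt ℝ 2 u x) (c : ℝ) :
    lapl (fun y => c * u y) x = c * lapl u x := by
  rw [lapl_eq, lapl_eq, Finset.mul_sum]
  refine Finset.sum_congr rfl fun i _ => ?_
  have h1 : pd i (fun y => c * u y) =ᶠ[𝓝 x] fun y => c * pd i u y := by
    filter_upwards [hu.eventually_diff] with y h1
    simp [pd, fderiv_const_mul h1]
  rw [(pd_congr h1).eq_of_nhds]
  have a := (pd_contDiffAt (i := i) hu).differentiableAt (by norm_num)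
  rw [pd, fderiv_const_mul a]; simp [pd]

lemma lapl_comp {N : ℕ} {k k' k'' : ℝ → ℝ} (hk : ∀ t, HasDerivAt k (k' t) t)
    (hk' : ∀ t, HasDerivAt k' (k'' t) t) {g : RN N → ℝ} {x : RN N} (hg : ContDiffAt ℝ 2 g x) :
    lapl (fun y => k (g y)) x = k'' (g x) * ∑ i, (pd i g x) ^ 2 + k' (g x) * lapl g x := by
  rw [lapl_eq, lapl_eq, Finset.mul_sum, Finset.mul_sum, ← Finset.sum_add_distrib]
  refine Finset.sum_congr rfl fun i _ => ?_
  have h1 : pd i (fun y => k (g y)) =ᶠ[𝓝 x] fun y => k' (g y) * pd i g y := by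
    filter_upwards [hg.eventually_diff] with y h1
    have := ((hk (g y)).comp_hasFDerivAt y h1.hasFDerivAt).fderiv
    simp only [pd]
    have e : (k ∘ g) = fun y => k (g y) := rfl
    rw [← e, this]; simp
  rw [(pd_congr h1).eq_of_nhds]
  have a := (pd_contDiffAt (i := i) hg).differentiableAt (by norm_num)
  have b := (hk' (g x)).comp_hasFDerivAt x hg.eventually_diff.self_of_nhds.hasFDerivAt
  have c := (b.mul a.hasFDerivAt).fderiv
  have e : ((k' ∘ g) * pd i g) = fun y => k' (g y) * pd i g y := rfl
  rw [e] at c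
  rw [pd, c]
  simp [pd]; ring

lemma pd_normSq {N : ℕ} (i : Fin N) : pd i (fun y : RN N => ‖y‖ ^ 2) = fun x => 2 * x i := by
  ext x
  have := (hasStrictFDerivAt_norm_sq (x : RN N)).hasFDerivAt.fderiv
  simp only [pd]
  rw [this]
  simp [EuclideanSpace.inner_single_right]

lemma lapl_normSq {N : ℕ} (x : RN N) : lapl (fun y : RN N => ‖y‖ ^ 2) x = 2 * N := by
  rw [lapl_eq]
  simp_rw [pd_normSq]
  have : ∀ i : Fin N, pd i (fun y : RN N => 2 * y i) x = 2 := by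
    intro i
    have h : HasFDerivAt (fun y : RN N => 2 * y i) ((2:ℝ) • EuclideanSpace.proj i : RN N →L[ℝ] ℝ) x := by
      exact (EuclideanSpace.proj (𝕜 := ℝ) i : RN N →L[ℝ] ℝ).hasFDerivAt.const_mul 2
    rw [pd, h.fderiv]; simp
  simp [this]; ring

lemma pd_scale {N : ℕ} (i : Fin N) {u : RN N → ℝ} (x : RN N) (c : ℝ) {z : RN N}
    (hu : DifferentiableAt ℝ u (c • (x - z))) :
    pd i (fun z => u (c • (x - z))) z = - c * pd i u (c • (x - z)) := by
  have h1 : HasFDerivAt (fun z : RN N => c • (x - z)) (c • (-ContinuousLinearMap.id ℝ (RN N))) z := by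
    exact ((hasFDerivAt_id (𝕜 := ℝ) z).const_sub x).const_smul c
  have := (hu.hasFDerivAt.comp z h1).fderiv
  have e : (u ∘ fun z => c • (x - z)) = fun z => u (c • (x - z)) := rfl
  rw [e] at this
  rw [pd, this]; simp [pd]

lemma lapl_scale {N : ℕ} {u : RN N → ℝ} (hu : ContDiff ℝ 2 u) (x : RN N) (c : ℝ) (z : RN N) :
    lapl (fun z => u (c • (x - z))) z = c ^ 2 * lapl u (c • (x - z)) := by
  rw [lapl_eq, lapl_eq, Finset.mul_sum]
  refine Finset.sum_congr rfl fun i _ => ?_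
  have h1 : pd i (fun z => u (c • (x - z))) = fun z => (fun y => - c * pd i u y) (c • (x - z)) := by
    ext z; exact pd_scale i x c (hu.differentiable (by norm_num) _)
  have a := (pd_contDiffAt (i := i) (hu.contDiffAt (x := c • (x - z)))).differentiableAt (by norm_num)
  rw [h1, pd_scale i x c (a.const_mul _)]
  have : pd i (fun y => -c * pd i u y) (c • (x-z)) = -c * pd i (pd i u) (c • (x-z)) := by
    rw [pd, fderiv_const_mul a]; simp [pd]
  rw [this]; ring

lemma integral_pd_zero {N : ℕ} (i : Fin N) {F : RN N → ℝ} (hF : ContDiff ℝ 1 F)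
    (hc : HasCompactSupport F) : ∫ x, pd i F x = 0 := by
  have hc' : HasCompactSupport (pd i F) := by
    have := hc.fderiv_apply (𝕜 := ℝ) (EuclideanSpace.single i 1)
    exact this
  have cont : Continuous (pd i F) :=
    continuous_iff_continuousAt.2 fun x => pd_continuousAt hF.contDiffAt
  have := integral_mul_fderiv_eq_neg_fderiv_mul_of_integrable (μ := (volume : Measure (RN N)))
    (f := fun _ : RN N => (1:ℝ)) (g := F) (v := EuclideanSpace.single i 1) (𝕜 := ℝ)
    (by simp) (by simp only [one_mul]; exact cont.integrable_of_hasCompactSupport hc')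
    (by simpa using hF.continuous.integrable_of_hasCompactSupport hc)
    (by intros; fun_prop) (fun x _ => hF.differentiable (by norm_num) x)
  simpa [pd] using this

/-- Test functions on `Ω`. -/
def TestFn {N : ℕ} (Ω : Set (RN N)) : Submodule ℝ (RN N → ℝ) where
  carrier := {ψ | ContDiff ℝ 2 ψ ∧ HasCompactSupport ψ ∧ tsupport ψ ⊆ Ω}
  add_mem' := by
    rintro a b ⟨h1, h2, h3⟩ ⟨h4, h5, h6⟩
    exact ⟨h1.add h4, h2.add h5, (tsupport_add a b).trans (union_subset h3 h6)⟩
  zero_mem' := ⟨contDiff_const, HasCompactSupport.zero, by simp [tsupport]⟩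
  smul_mem' := by
    rintro c a ⟨h1, h2, h3⟩
    refine ⟨contDiff_const.smul h1, h2.smul_left (f := fun _ => c), ?_⟩
    exact (tsupport_smul_subset_right (fun _ => c) a).trans h3

lemma pd_zero_off {N : ℕ} {i : Fin N} {u : RN N → ℝ} {x : RN N} (h : x ∉ tsupport u) :
    pd i u =ᶠ[𝓝 x] fun _ => 0 := by
  have := pd_congr (i := i) (notMem_tsupport_iff_eventuallyEq.1 h)
  refine this.trans (Eventually.of_forall fun y => ?_)
  have e : (0 : RN N → ℝ) = fun _ => 0 := rfl
  simp [pd, e]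

lemma lapl_zero_off {N : ℕ} {u : RN N → ℝ} {x : RN N} (h : x ∉ tsupport u) : lapl u x = 0 := by
  rw [lapl_congr (notMem_tsupport_iff_eventuallyEq.1 h)]
  have e : (0 : RN N → ℝ) = fun _ => 0 := rfl
  simp [lapl, e]

lemma lapl_compact {N : ℕ} {u : RN N → ℝ} (h : HasCompactSupport u) : HasCompactSupport (lapl u) :=
  HasCompactSupport.intro h (fun _ hx => lapl_zero_off hx)

lemma lapl_continuous {N : ℕ} {u : RN N → ℝ} (h : ContDiff ℝ 2 u) : Continuous (lapl u) :=
  continuous_iff_continuousAt.2 fun _ => lapl_continuousAt h.contDiffAt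

lemma green {N : ℕ} {Ω : Set (RN N)} (hΩ : IsOpen Ω) {w ψ : RN N → ℝ} (hw : ContDiffOn ℝ 2 w Ω)
    (hψ : ψ ∈ TestFn Ω) : ∫ x, w x * lapl ψ x = ∫ x, ψ x * lapl w x := by
  obtain ⟨h1, h2, h3⟩ := hψ
  have hwat : ∀ x ∈ Ω, ContDiffAt ℝ 2 w x := fun x hx => hw.contDiffAt (hΩ.mem_nhds hx)
  set F : Fin N → RN N → ℝ := fun i x => w x * pd i ψ x - ψ x * pd i w x with hFdef
  have Foff : ∀ i x, x ∉ tsupport ψ → F i =ᶠ[𝓝 x] fun _ => 0 := by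
    intro i x hx
    filter_upwards [pd_zero_off (i := i) hx, notMem_tsupport_iff_eventuallyEq.1 hx] with y h4 h5
    simp [hFdef, h4, h5]
  have FC : ∀ i, ContDiff ℝ 1 (F i) := by
    intro i
    rw [contDiff_iff_contDiffAt]
    intro x
    by_cases hx : x ∈ tsupport ψ
    · have := hwat x (h3 hx)
      exact ((this.of_le (by norm_num)).mul (pd_contDiffAt h1.contDiffAt)).sub
        ((h1.contDiffAt.of_le (by norm_num)).mul (pd_contDiffAt this))
    · exact contDiffAt_const.congr_of_eventuallyEq (Foff i x hx)
  have Fcs : ∀ i, HasCompactSupport (F i) := fun i =>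
    HasCompactSupport.intro h2 fun x hx => (Foff i x hx).eq_of_nhds
  have pdF : ∀ i x, pd i (F i) x = w x * pd i (pd i ψ) x - ψ x * pd i (pd i w) x := by
    intro i x
    by_cases hx : x ∈ tsupport ψ
    · have hwx := hwat x (h3 hx)
      have a := (pd_contDiffAt (i := i) hwx).differentiableAt (by norm_num)
      have b := (pd_contDiffAt (i := i) (h1.contDiffAt (x := x))).differentiableAt (by norm_num)
      have c := hwx.differentiableAt (by norm_num)
      have d := h1.contDiffAt (x := x) |>.differentiableAt (by norm_num)
      have := ((c.hasFDerivAt.mul b.hasFDerivAt).sub (d.hasFDerivAt.mul a.hasFDerivAt)).fderiv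
      have e : (w * pd i ψ - ψ * pd i w) = F i := rfl
      rw [e] at this
      rw [pd, this]; simp [pd]; ring
    · rw [(pd_congr (Foff i x hx)).eq_of_nhds]
      rw [(pd_congr (pd_zero_off (i := i) hx)).eq_of_nhds,
        (notMem_tsupport_iff_eventuallyEq.1 hx).eq_of_nhds]
      simp [pd]
  have key : ∀ x, w x * lapl ψ x - ψ x * lapl w x = ∑ i, pd i (F i) x := by
    intro x
    simp only [pdF, lapl_eq, Finset.mul_sum, Finset.sum_sub_distrib]
  have int1 : Integrable (fun x => w x * lapl ψ x) := by
    refine Continuous.integrable_of_hasCompactSupport ?_ ((lapl_compact h2).mul_left)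
    rw [continuous_iff_continuousAt]
    intro x
    by_cases hx : x ∈ tsupport ψ
    · exact (hwat x (h3 hx)).continuousAt.mul (lapl_continuousAt h1.contDiffAt)
    · have : (fun x => w x * lapl ψ x) =ᶠ[𝓝 x] fun _ => 0 := by
        filter_upwards [(isClosed_tsupport ψ).isOpen_compl.mem_nhds hx] with y hy
        simp [lapl_zero_off hy]
      exact continuousAt_const.congr this.symm
  have int2 : Integrable (fun x => ψ x * lapl w x) := by
    refine Continuous.integrable_of_hasCompactSupport ?_ (h2.mul_right)
    rw [continuous_iff_continuousAt]
    intro x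
    by_cases hx : x ∈ tsupport ψ
    · exact h1.continuous.continuousAt.mul (lapl_continuousAt (hwat x (h3 hx)))
    · have : (fun x => ψ x * lapl w x) =ᶠ[𝓝 x] fun _ => 0 := by
        filter_upwards [notMem_tsupport_iff_eventuallyEq.1 hx] with y hy
        simp [hy]
      exact continuousAt_const.congr this.symm
  have : ∫ x, (w x * lapl ψ x - ψ x * lapl w x) = 0 := by
    simp_rw [key]
    rw [integral_finsetSum]
    · simp [integral_pd_zero _ (FC _) (Fcs _)]
    · intro i _
      exact (continuous_iff_continuousAt.2 fun x => pd_continuousAt (FC i).contDiffAt)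
        |>.integrable_of_hasCompactSupport ((Fcs i).fderiv_apply (𝕜 := ℝ) (EuclideanSpace.single i 1))
  rw [integral_sub int1 int2] at this
  linarith

lemma kato {N : ℕ} {Ω : Set (RN N)} (hΩ : IsOpen Ω) {ξ : RN N → ℝ} (hξ2 : ContDiffOn ℝ 2 ξ Ω)
    (hξ0 : ∀ x ∈ Ω, 0 ≤ ξ x) (hξl : ∀ x ∈ Ω, -lapl ξ x = 1) {ψ : RN N → ℝ} (hψ : ψ ∈ TestFn Ω) :
    Integrable (fun x => ξ x * |lapl ψ x|) ∧ ∫ x, |ψ x| ≤ ∫ x, ξ x * |lapl ψ x| := by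
  obtain ⟨h1, h2, h3⟩ := hψ
  have contmul : ∀ g : RN N → ℝ, Continuous g → (∀ x ∉ tsupport ψ, g x = 0) →
      Integrable (fun x => ξ x * g x) := by
    intro g hg hg0
    refine Continuous.integrable_of_hasCompactSupport ?_
      ((HasCompactSupport.intro h2 hg0).mul_left)
    rw [continuous_iff_continuousAt]
    intro x
    by_cases hx : x ∈ tsupport ψ
    · exact ((hξ2.contDiffAt (hΩ.mem_nhds (h3 hx))).continuousAt).mul hg.continuousAt
    · have : (fun x => ξ x * g x) =ᶠ[𝓝 x] fun _ => 0 := by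
        filter_upwards [(isClosed_tsupport ψ).isOpen_compl.mem_nhds hx] with y hy
        simp [hg0 y hy]
      exact continuousAt_const.congr this.symm
  have I1 := contmul (fun x => |lapl ψ x|) (lapl_continuous h1).abs
    (fun x hx => by simp [lapl_zero_off hx])
  refine ⟨I1, ?_⟩
  have hfin : volume (tsupport ψ) ≠ ⊤ := h2.measure_lt_top.ne
  have main : ∀ ε : ℝ, 0 < ε → ∫ x, |ψ x| ≤ (∫ x, ξ x * |lapl ψ x|) + ε * volume.real (tsupport ψ) := by
    intro ε hε
    set k : ℝ → ℝ := fun t => √(t ^ 2 + ε ^ 2) - ε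
    set k' : ℝ → ℝ := fun t => t / √(t ^ 2 + ε ^ 2)
    set k'' : ℝ → ℝ := fun t => ε ^ 2 / (√(t ^ 2 + ε ^ 2)) ^ 3
    have pos : ∀ t : ℝ, 0 < t ^ 2 + ε ^ 2 := fun t => by positivity
    have hs : ∀ t : ℝ, HasDerivAt (fun t => √(t ^ 2 + ε ^ 2)) (t / √(t ^ 2 + ε ^ 2)) t := by
      intro t
      have a : HasDerivAt (fun t : ℝ => t ^ 2 + ε ^ 2) (2 * t) t := by
        simpa using (hasDerivAt_pow 2 t).add_const (ε ^ 2)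
      convert! a.sqrt (pos t).ne' using 1
      field_simp
    have hk : ∀ t, HasDerivAt k (k' t) t := fun t => (hs t).sub_const ε
    have hk' : ∀ t, HasDerivAt k' (k'' t) t := by
      intro t
      have sp : 0 < √(t ^ 2 + ε ^ 2) := Real.sqrt_pos.2 (pos t)
      convert! (hasDerivAt_id t).div (hs t) sp.ne' using 1
      simp only [k'', id]
      have : √(t ^ 2 + ε ^ 2) ^ 2 = t ^ 2 + ε ^ 2 := Real.sq_sqrt (pos t).le
      field_simp
      rw [this]; ring
    have hkC : ContDiff ℝ 2 k := by
      have : ContDiff ℝ 2 fun t : ℝ => t ^ 2 + ε ^ 2 := by fun_prop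
      exact (this.sqrt fun t => (pos t).ne').sub contDiff_const
    have hk0 : k 0 = 0 := by simp [k, Real.sqrt_sq hε.le]
    set ψ' : RN N → ℝ := fun x => k (ψ x)
    have supp : tsupport ψ' ⊆ tsupport ψ := by
      refine closure_mono fun x hx => ?_
      simp only [Function.mem_support, ψ'] at hx ⊢
      intro h; rw [h] at hx; exact hx hk0
    have hψ' : ψ' ∈ TestFn Ω :=
      ⟨hkC.comp h1, HasCompactSupport.intro h2 (fun x hx => by
        simp [ψ', image_eq_zero_of_notMem_tsupport hx, hk0]), supp.trans h3⟩
    have g := green hΩ hξ2 hψ'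
    have e1 : ∫ x, ψ' x * lapl ξ x = - ∫ x, ψ' x := by
      rw [← integral_neg]
      congr 1; ext x
      by_cases hx : x ∈ tsupport ψ
      · have := hξl x (h3 hx)
        have : lapl ξ x = -1 := by linarith
        rw [this]; ring
      · simp [ψ', image_eq_zero_of_notMem_tsupport hx, hk0]
    have e2 : - ∫ x, ξ x * lapl ψ' x ≤ ∫ x, ξ x * |lapl ψ x| := by
      rw [← integral_neg]
      refine integral_mono ?_ I1 ?_
      · exact (contmul (lapl ψ') (lapl_continuous hψ'.1) (fun x hx => by
          exact lapl_zero_off fun h => hx (supp h))).neg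
      · intro x
        by_cases hx : x ∈ tsupport ψ
        · have l := lapl_comp hk hk' (h1.contDiffAt (x := x))
          have e : lapl ψ' x = lapl (fun y => k (ψ y)) x := rfl
          rw [← e] at l
          have sp : 0 < √(ψ x ^ 2 + ε ^ 2) := Real.sqrt_pos.2 (pos _)
          have a1 : 0 ≤ k'' (ψ x) * ∑ i, pd i ψ x ^ 2 := by
            apply mul_nonneg
            · simp only [k'']; positivity
            · exact Finset.sum_nonneg fun i _ => sq_nonneg _
          have a2 : |k' (ψ x)| ≤ 1 := by
            simp only [k', abs_div, abs_of_pos sp]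
            rw [div_le_one sp]
            apply Real.abs_le_sqrt; nlinarith
          have a3 : -(k' (ψ x) * lapl ψ x) ≤ |lapl ψ x| := by
            refine (neg_le_abs _).trans ?_
            rw [abs_mul]
            exact mul_le_of_le_one_left (abs_nonneg _) a2
          show -(ξ x * lapl ψ' x) ≤ ξ x * |lapl ψ x|
          rw [← mul_neg]
          exact mul_le_mul_of_nonneg_left (by rw [l]; linarith) (hξ0 x (h3 hx))
        · have a : lapl ψ' x = 0 := lapl_zero_off fun h => hx (supp h)
          simp [a, lapl_zero_off hx]
    have e3 : ∫ x, |ψ x| ≤ ∫ x, (ψ' x + (tsupport ψ).indicator (fun _ => ε) x) := by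
      refine integral_mono ?_ ?_ ?_
      · exact (h1.continuous.integrable_of_hasCompactSupport h2).abs
      · refine (hψ'.1.continuous.integrable_of_hasCompactSupport hψ'.2.1).add ?_
        rw [integrable_indicator_iff (isClosed_tsupport ψ).measurableSet]
        exact integrableOn_const hfin
      · intro x
        by_cases hx : x ∈ tsupport ψ
        · simp only [hx, indicator_of_mem, ψ', k]
          have : |ψ x| ≤ √(ψ x ^ 2 + ε ^ 2) := Real.abs_le_sqrt (by nlinarith)
          linarith
        · simp [hx, ψ', image_eq_zero_of_notMem_tsupport hx, hk0]
    rw [integral_add (hψ'.1.continuous.integrable_of_hasCompactSupport hψ'.2.1)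
      (by rw [integrable_indicator_iff (isClosed_tsupport ψ).measurableSet]
          exact integrableOn_const hfin),
      integral_indicator_const _ (isClosed_tsupport ψ).measurableSet] at e3
    rw [smul_eq_mul, mul_comm] at e3
    linarith
  set V := volume.real (tsupport ψ)
  have hV : 0 ≤ V := measureReal_nonneg
  refine le_of_forall_pos_le_add fun δ hδ => ?_
  refine (main (δ / (V + 1)) (by positivity)).trans ?_
  have : δ / (V + 1) * V ≤ δ := by
    rw [div_mul_eq_mul_div, div_le_iff₀ (by positivity)]; nlinarith
  linarith

/-- Very weak solutions of `-Δ w = h`. -/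
def WeakSol {N : ℕ} (Ω : Set (RN N)) (w h : RN N → ℝ) : Prop :=
  ∀ ψ ∈ TestFn Ω, ∫ x, w x * lapl ψ x = - ∫ x, h x * ψ x

lemma setIntegral_test {N : ℕ} {Ω : Set (RN N)} (F : RN N → ℝ) (h : ∀ x ∉ Ω, F x = 0) :
    ∫ x in Ω, F x = ∫ x, F x := by
  exact setIntegral_eq_integral_of_forall_compl_eq_zero h

lemma exists_range_section {V W : Type*} [AddCommGroup V] [Module ℝ V] [AddCommGroup W]
    [Module ℝ W] (L : V →ₗ[ℝ] W) :
    ∃ R : LinearMap.range L →ₗ[ℝ] V, ∀ y, L (R y) = y.1 := by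
  obtain ⟨R, hR⟩ := L.rangeRestrict.exists_rightInverse_of_surjective L.range_rangeRestrict
  refine ⟨R, fun y => ?_⟩
  have := congrArg (fun l => (l y).1) hR
  simpa using this

theorem exists_weak {N : ℕ} {Ω : Set (RN N)} (hΩ : IsOpen Ω) (hb : Bornology.IsBounded Ω)
    {ξ : RN N → ℝ} (hξ : IsTorsionFn Ω ξ) {h : RN N → ℝ} {M : ℝ}
    (hM0 : 0 ≤ M) (hm : AEStronglyMeasurable h) (hM : ∀ x, |h x| ≤ M) :
    ∃ w : RN N → ℝ, Integrable w ∧ (∀ᵐ x, |w x| ≤ M * Ω.indicator ξ x) ∧ WeakSol Ω w h := by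
  obtain ⟨hξc, hξ2, hξ0, hξl, hξb⟩ := hξ
  set μ : Measure (RN N) := volume.restrict Ω with hμ
  have hK : IsCompact (closure Ω) := hb.isCompact_closure
  have hvol : volume Ω ≠ ⊤ := hb.measure_lt_top.ne
  have : IsFiniteMeasure μ := ⟨by simpa [hμ] using hvol.lt_top⟩
  obtain ⟨B, hB⟩ := hK.exists_bound_of_continuousOn hξc
  have hξm : AEStronglyMeasurable ξ μ :=
    (hξc.mono subset_closure).aestronglyMeasurable hΩ.measurableSet
  have hξB : ∀ᵐ x ∂μ, ‖ξ x‖ ≤ B := by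
    filter_upwards [ae_restrict_mem hΩ.measurableSet] with x hx using hB x (subset_closure hx)
  have hξL : MemLp ξ 2 μ := MemLp.of_bound hξm B hξB
  have memL : ∀ ψ ∈ TestFn Ω, MemLp (lapl ψ) 2 μ := fun ψ hψ =>
    ((lapl_continuous hψ.1).memLp_of_hasCompactSupport (lapl_compact hψ.2.1))
  let L : TestFn Ω →ₗ[ℝ] Lp ℝ 2 μ :=
    { toFun := fun ψ => (memL ψ.1 ψ.2).toLp
      map_add' := by
        intro a b
        rw [← MemLp.toLp_add]
        apply MemLp.toLp_congr
        filter_upwards with x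
        exact lapl_add a.2.1.contDiffAt b.2.1.contDiffAt
      map_smul' := by
        intro c a
        rw [RingHom.id_apply, ← MemLp.toLp_const_smul]
        apply MemLp.toLp_congr
        filter_upwards with x
        exact lapl_const_mul a.2.1.contDiffAt c }
  have Lcoe : ∀ ψ : TestFn Ω, L ψ =ᵐ[μ] lapl ψ.1 := fun ψ => (memL ψ.1 ψ.2).coeFn_toLp
  have gint : ∀ g : Lp ℝ 2 μ, Integrable (fun x => ξ x * |g x|) μ := by
    intro g
    have : Integrable g μ := (Lp.memLp g).integrable (by norm_num)
    exact this.abs.bdd_mul hξm hξB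
  set P : Lp ℝ 2 μ → ℝ := fun g => M * ∫ x, ξ x * |g x| ∂μ with hP
  have kat : ∀ ψ : TestFn Ω, ∫ x, |ψ.1 x| ≤ ∫ x, ξ x * |L ψ x| ∂μ := by
    intro ψ
    have e : ∫ x, ξ x * |L ψ x| ∂μ = ∫ x, ξ x * |lapl ψ.1 x| := by
      have : ∫ x, ξ x * |L ψ x| ∂μ = ∫ x, ξ x * |lapl ψ.1 x| ∂μ := by
        apply integral_congr_ae
        filter_upwards [Lcoe ψ] with x hx
        rw [hx]
      rw [this, hμ]
      apply setIntegral_test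
      intro x hx
      rw [lapl_zero_off fun hh => hx (ψ.2.2.2 hh)]; simp
    rw [e]
    exact (kato hΩ hξ2 hξ0 hξl ψ.2).2
  have hψint : ∀ ψ : TestFn Ω, Integrable ψ.1 := fun ψ =>
    ψ.2.1.continuous.integrable_of_hasCompactSupport ψ.2.2.1
  have hhψ : ∀ ψ : TestFn Ω, Integrable (fun x => h x * ψ.1 x) := fun ψ =>
    (hψint ψ).bdd_mul hm (Eventually.of_forall hM)
  let J : TestFn Ω →ₗ[ℝ] ℝ :=
    { toFun := fun ψ => - ∫ x, h x * ψ.1 x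
      map_add' := by
        intro a b
        have : ∀ x, h x * (a + b).1 x = h x * a.1 x + h x * b.1 x := fun x => by
          show h x * (a.1 x + b.1 x) = _
          ring
        simp_rw [this]
        rw [integral_add (hhψ a) (hhψ b)]; ring
      map_smul' := by
        intro c a
        have : ∀ x, h x * (c • a).1 x = c * (h x * a.1 x) := fun x => by
          show h x * (c * a.1 x) = _
          ring
        simp_rw [this]
        rw [integral_const_mul]; simp }
  have Jle : ∀ ψ, J ψ ≤ P (L ψ) := by
    intro ψ
    have : J ψ ≤ ∫ x, M * |ψ.1 x| := by
      show - ∫ x, h x * ψ.1 x ≤ _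
      rw [← integral_neg]
      refine integral_mono (hhψ ψ).neg ((hψint ψ).abs.const_mul M) fun x => ?_
      refine (neg_le_abs _).trans ?_
      rw [abs_mul]
      exact mul_le_mul_of_nonneg_right (hM x) (abs_nonneg _)
    rw [integral_const_mul] at this
    exact this.trans (mul_le_mul_of_nonneg_left (kat ψ) hM0)
  have Jker : ∀ ψ, L ψ = 0 → J ψ = 0 := by
    intro ψ hψ
    have P0 : P 0 = 0 := by
      simp only [hP]
      have : ∫ x, ξ x * |(0 : Lp ℝ 2 μ) x| ∂μ = ∫ x, 0 ∂μ := by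
        apply integral_congr_ae
        filter_upwards [Lp.coeFn_zero ℝ 2 μ] with x hx
        rw [hx]; simp
      rw [this]; simp
    have a := Jle ψ
    have b := Jle (-ψ)
    rw [map_neg, map_neg, hψ, neg_zero, P0] at b
    rw [hψ, P0] at a
    linarith
  obtain ⟨R, hR'⟩ := exists_range_section L
  let f0 : (Lp ℝ 2 μ) →ₗ.[ℝ] ℝ := ⟨LinearMap.range L, J.comp R⟩
  obtain ⟨Λ, hΛ1, hΛ2⟩ := exists_extension_of_le_sublinear f0 P
    (by
      intro c hc g
      simp only [hP]
      have : ∫ x, ξ x * |(c • g : Lp ℝ 2 μ) x| ∂μ = ∫ x, c * (ξ x * |g x|) ∂μ := by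
        apply integral_congr_ae
        filter_upwards [Lp.coeFn_smul c g] with x hx
        rw [hx]; simp [abs_mul, abs_of_pos hc]; ring
      rw [this, integral_const_mul]; ring)
    (by
      intro g1 g2
      simp only [hP]
      rw [← mul_add, ← integral_add (gint g1) (gint g2)]
      refine mul_le_mul_of_nonneg_left ?_ hM0
      refine integral_mono_ae (gint _) ((gint _).add (gint _)) ?_
      filter_upwards [Lp.coeFn_add g1 g2, ae_restrict_mem hΩ.measurableSet] with x hx hxΩ
      rw [hx, Pi.add_apply, ← mul_add]
      exact mul_le_mul_of_nonneg_left (abs_add_le _ _) (hξ0 x hxΩ))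
    (by
      intro y
      show J (R y) ≤ P y.1
      rw [← hR' y]
      exact Jle _)
  have Pbd : ∀ g, P g ≤ (M * ‖hξL.toLp‖) * ‖g‖ := by
    intro g
    simp only [hP]
    rw [mul_assoc]
    refine mul_le_mul_of_nonneg_left ?_ hM0
    have : ∫ x, ξ x * |g x| ∂μ = inner ℝ hξL.toLp |g| := by
      rw [L2.inner_def]
      apply integral_congr_ae
      filter_upwards [Lp.coeFn_abs g, hξL.coeFn_toLp] with x hx hx2
      rw [hx, hx2]; simp [mul_comm]
    rw [this]
    refine (real_inner_le_norm _ _).trans ?_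
    rw [norm_abs_eq_norm]
  let Λc : Lp ℝ 2 μ →L[ℝ] ℝ := Λ.mkContinuous (M * ‖hξL.toLp‖) (by
    intro g
    rw [Real.norm_eq_abs, abs_le]
    constructor
    · have := (hΛ2 (-g)).trans (Pbd (-g))
      rw [map_neg, norm_neg] at this
      linarith
    · exact (hΛ2 g).trans (Pbd g))
  set W : Lp ℝ 2 μ := (InnerProductSpace.toDual ℝ _).symm Λc with hW
  have hWin : ∀ g, ∫ x, W x * g x ∂μ = Λ g := by
    intro g
    have : inner ℝ W g = Λc g := by rw [hW]; simp
    rw [show Λ g = Λc g from rfl, ← this, L2.inner_def]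
    congr 1; ext x; simp [mul_comm]
  have Wint : Integrable W μ := (Lp.memLp W).integrable (by norm_num)
  have ξint : Integrable ξ μ := hξL.integrable (by norm_num)
  have bound : ∀ c : ℝ, |c| = 1 → ∀ᵐ x ∂μ, c * W x ≤ M * ξ x := by
    intro c hc
    refine ae_le_of_forall_setIntegral_le (Wint.const_mul c) (ξint.const_mul M) ?_
    intro s hs hsfin
    have ms : MemLp (s.indicator fun _ => c) 2 μ := memLp_indicator_const 2 hs c (Or.inr hsfin.ne)
    have a := (hWin ms.toLp).symm ▸ hΛ2 ms.toLp
    have e1 : ∫ x, W x * ms.toLp _ x ∂μ = ∫ x in s, c * W x ∂μ := by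
      rw [← integral_indicator hs]
      apply integral_congr_ae
      filter_upwards [ms.coeFn_toLp] with x hx
      rw [hx]; by_cases hxs : x ∈ s <;> simp [hxs, mul_comm]
    have e2 : P (ms.toLp) = ∫ x in s, M * ξ x ∂μ := by
      rw [integral_const_mul, ← integral_indicator hs]
      show M * _ = M * _
      congr 1
      apply integral_congr_ae
      filter_upwards [ms.coeFn_toLp] with x hx
      rw [hx]; by_cases hxs : x ∈ s <;> simp [hxs, hc]
    rw [e1, e2] at a
    exact a
  refine ⟨Ω.indicator W, (integrable_indicator_iff hΩ.measurableSet).2 Wint, ?_, ?_⟩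
  · have b1 := (ae_restrict_iff' hΩ.measurableSet).1 (bound 1 (by simp))
    have b2 := (ae_restrict_iff' hΩ.measurableSet).1 (bound (-1) (by simp))
    filter_upwards [b1, b2] with x h1 h2
    by_cases hx : x ∈ Ω
    · simp only [hx, indicator_of_mem]
      rw [abs_le]
      have := h1 hx
      have := h2 hx
      constructor <;> linarith
    · simp [hx]
  · intro ψ hψ
    have e : ∫ x, Ω.indicator W x * lapl ψ x = ∫ x, W x * L ⟨ψ, hψ⟩ x ∂μ := by
      have : ∫ x, W x * L ⟨ψ, hψ⟩ x ∂μ = ∫ x, W x * lapl ψ x ∂μ := by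
        apply integral_congr_ae
        filter_upwards [Lcoe ⟨ψ, hψ⟩] with x hx
        rw [hx]
      rw [this]
      change _ = ∫ x in Ω, W x * lapl ψ x
      rw [← integral_indicator hΩ.measurableSet]
      congr 1; ext x
      by_cases hx : x ∈ Ω <;> simp [hx]
    rw [e, hWin]
    have y : L ⟨ψ, hψ⟩ ∈ LinearMap.range L := ⟨_, rfl⟩
    have := hΛ1 ⟨L ⟨ψ, hψ⟩, y⟩
    rw [show Λ (L ⟨ψ, hψ⟩) = _ from this]
    show J (R ⟨L ⟨ψ, hψ⟩, y⟩) = J ⟨ψ, hψ⟩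
    rw [← sub_eq_zero, ← map_sub]
    apply Jker
    rw [map_sub, hR', sub_self]

/-- Radial kernels used for the mean value identities. -/
structure Ker (N : ℕ) where
  κ : RN N → ℝ
  η : RN N → ℝ
  κ_diff : ContDiff ℝ 2 κ
  κ_nonneg : ∀ y, 0 ≤ κ y
  κ_off : ∀ y, 1 ≤ ‖y‖ → κ y = 0
  η_diff : ContDiff ℝ 2 η
  η_nonneg : ∀ y, 0 ≤ η y
  η_off : ∀ y, 1 ≤ ‖y‖ → η y = 0
  η_pos : ∀ y, 1 / 2 ≤ ‖y‖ → ‖y‖ < 1 → 0 < η y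
  lap : ∀ y, lapl κ y = η y - 2 ^ N * η ((2 : ℝ) • y)

def kE (t : ℝ) : ℝ := expNegInvGlue (t - 1 / 5) * expNegInvGlue (1 - t)

lemma kE_diff : ContDiff ℝ 2 kE :=
  (expNegInvGlue.contDiff.comp (contDiff_id.sub contDiff_const)).mul
    (expNegInvGlue.contDiff.comp (contDiff_const.sub contDiff_id))

lemma kE_nonneg (t : ℝ) : 0 ≤ kE t := mul_nonneg (expNegInvGlue.nonneg _) (expNegInvGlue.nonneg _)

lemma kE_left {t : ℝ} (h : t ≤ 1 / 5) : kE t = 0 := by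
  rw [kE, expNegInvGlue.zero_of_nonpos (by linarith), zero_mul]

lemma kE_right {t : ℝ} (h : 1 ≤ t) : kE t = 0 := by
  rw [kE, expNegInvGlue.zero_of_nonpos (x := 1 - t) (by linarith), mul_zero]

lemma kE_pos {t : ℝ} (h : 1 / 5 < t) (h' : t < 1) : 0 < kE t :=
  mul_pos (expNegInvGlue.pos_of_pos (by linarith)) (expNegInvGlue.pos_of_pos (by linarith))

lemma rpow_mul_contDiff {n : WithTop ℕ∞} {F : ℝ → ℝ} (hF : ContDiff ℝ n F) {ε : ℝ} (hε : 0 < ε)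
    (h0 : ∀ t ≤ ε, F t = 0) (a : ℝ) : ContDiff ℝ n (fun t => t ^ a * F t) := by
  rw [contDiff_iff_contDiffAt]
  intro t
  by_cases ht : t < ε
  · have : (fun t => t ^ a * F t) =ᶠ[𝓝 t] fun _ => 0 := by
      filter_upwards [Iio_mem_nhds ht] with s hs
      rw [h0 s hs.le, mul_zero]
    exact contDiffAt_const.congr_of_eventuallyEq this
  · have : t ≠ 0 := by linarith
    exact (Real.contDiffAt_rpow_const_of_ne this).mul hF.contDiffAt

lemma contDiff_prim {F : ℝ → ℝ} {n : ℕ} (hF : ContDiff ℝ n F) (a : ℝ) :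
    ContDiff ℝ (n + 1) (fun t => ∫ s in a..t, F s) := by
  have hd : ∀ t, HasDerivAt (fun t => ∫ s in a..t, F s) (F t) t := fun t =>
    intervalIntegral.integral_hasDerivAt_right (hF.continuous.intervalIntegrable _ _)
      (hF.continuous.stronglyMeasurableAtFilter _ _) hF.continuous.continuousAt
  rw [contDiff_succ_iff_deriv]
  refine ⟨fun t => (hd t).differentiableAt, by simp, ?_⟩
  rw [show deriv (fun t => ∫ s in a..t, F s) = F from funext fun t => (hd t).deriv]
  exact hF

theorem exists_ker (N : ℕ) : Nonempty (Ker N) := by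
  set b : ℝ → ℝ := fun t => t ^ ((N : ℝ) / 2 - 1) * (kE t / 4) with hb
  have bdiff : ContDiff ℝ 1 b := rpow_mul_contDiff ((kE_diff.of_le (by norm_num)).div_const 4)
    (ε := 1 / 5) (by norm_num) (fun t ht => by rw [kE_left ht]; simp) _
  have bleft : ∀ t ≤ 1 / 5, b t = 0 := fun t ht => by simp [hb, kE_left ht]
  have bright : ∀ t, 1 ≤ t → b t = 0 := fun t ht => by simp [hb, kE_right ht]
  have bnn : ∀ t, 0 ≤ b t := by
    intro t
    by_cases ht : t ≤ 1 / 5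
    · rw [bleft t ht]
    · have : 0 ≤ t := by linarith
      exact mul_nonneg (rpow_nonneg this _) (div_nonneg (kE_nonneg _) (by norm_num))
  set X : ℝ → ℝ := fun t => ∫ s in (0:ℝ)..t, b s with hX
  have bi : ∀ x y, IntervalIntegrable b volume x y := fun x y => bdiff.continuous.intervalIntegrable _ _
  have Xd : ∀ t, HasDerivAt X (b t) t := fun t =>
    intervalIntegral.integral_hasDerivAt_right (bi _ _)
      (bdiff.continuous.stronglyMeasurableAtFilter _ _) bdiff.continuous.continuousAt
  have Xdiff : ContDiff ℝ 1 X := (contDiff_prim (n := 1) (by exact_mod_cast bdiff) 0).of_le (by norm_num)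
  have Xsub : ∀ s t, X t - X s = ∫ r in s..t, b r := fun s t =>
    intervalIntegral.integral_interval_sub_left (bi _ _) (bi _ _)
  have Xmono : ∀ s t, s ≤ t → X s ≤ X t := fun s t hst => by
    have := Xsub s t
    have := intervalIntegral.integral_nonneg (μ := volume) hst (fun u _ => bnn u)
    linarith
  set Y : ℝ → ℝ := fun t => X t - X (4 * t) with hY
  have Yd : ∀ t, HasDerivAt Y (b t - 4 * b (4 * t)) t := fun t => by
    have h1 := (Xd (4 * t)).comp t ((hasDerivAt_id t).const_mul 4)
    have := (Xd t).sub h1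
    rw [show b t - 4 * b (4 * t) = b t - b (4 * t) * (4 * 1) by ring]
    exact this
  have Ydiff : ContDiff ℝ 1 Y := Xdiff.sub (Xdiff.comp (contDiff_const.mul contDiff_id))
  have X0 : ∀ t ≤ 1 / 5, X t = 0 := by
    intro t ht
    have : X t = ∫ s in (0:ℝ)..t, (0:ℝ) := by
      apply intervalIntegral.integral_congr
      intro s hs
      apply bleft
      rcases hs with ⟨_, h2⟩
      exact h2.trans (max_le (by norm_num) ht)
    rw [this]; simp
  have X1 : ∀ t, 1 ≤ t → X t = X 1 := by
    intro t ht
    have : X t - X 1 = ∫ s in (1:ℝ)..t, (0:ℝ) := by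
      rw [Xsub]
      apply intervalIntegral.integral_congr
      intro s hs
      apply bright
      rw [uIcc_of_le ht] at hs
      exact hs.1
    simp at this; linarith
  have Y0 : ∀ t ≤ 1 / 20, Y t = 0 := fun t ht => by
    simp only [hY]; rw [X0 t (by linarith), X0 (4 * t) (by linarith), sub_self]
  have Y1 : ∀ t, 1 ≤ t → Y t = 0 := fun t ht => by
    simp only [hY]; rw [X1 t ht, X1 (4 * t) (by linarith), sub_self]
  have Ynp : ∀ t, 0 ≤ t → Y t ≤ 0 := fun t ht => by
    have := Xmono t (4 * t) (by linarith)
    simp only [hY]; linarith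
  set q : ℝ → ℝ := fun t => t ^ (-((N : ℝ) / 2)) * Y t with hq
  have qdiff : ContDiff ℝ 1 q := rpow_mul_contDiff Ydiff (ε := 1 / 20) (by norm_num) Y0 _
  have q0 : ∀ t ≤ 1 / 20, q t = 0 := fun t ht => by simp [hq, Y0 t ht]
  have qnp : ∀ t, q t ≤ 0 := by
    intro t
    by_cases ht : t ≤ 1 / 20
    · rw [q0 t ht]
    · have : 0 ≤ t := by linarith
      exact mul_nonpos_of_nonneg_of_nonpos (rpow_nonneg this _) (Ynp t this)
  have q1 : ∀ t, 1 ≤ t → q t = 0 := fun t ht => by simp [hq, Y1 t ht]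
  set k : ℝ → ℝ := fun t => ∫ s in (1:ℝ)..t, q s with hk
  have kd : ∀ t, HasDerivAt k (q t) t := fun t =>
    intervalIntegral.integral_hasDerivAt_right (qdiff.continuous.intervalIntegrable _ _)
      (qdiff.continuous.stronglyMeasurableAtFilter _ _) qdiff.continuous.continuousAt
  have kdiff : ContDiff ℝ 2 k := (contDiff_prim (n := 1) (by exact_mod_cast qdiff) 1).of_le (by norm_num)
  have qd : ∀ t, HasDerivAt q (deriv q t) t := fun t =>
    (qdiff.differentiable (by norm_num) t).hasDerivAt
  have key : ∀ t, 0 ≤ t → 4 * t * deriv q t + 2 * N * q t = kE t - 2 ^ N * kE (4 * t) := by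
    intro t ht
    by_cases h : t < 1 / 20
    · have : q =ᶠ[𝓝 t] fun _ => 0 := by
        filter_upwards [Iio_mem_nhds h] with s hs
        exact q0 s hs.le
      rw [this.deriv_eq, q0 t h.le, kE_left (by linarith), kE_left (by linarith)]
      simp
    · have t0 : 0 < t := by linarith
      have h1 : HasDerivAt q ((-((N : ℝ) / 2)) * t ^ (-((N : ℝ) / 2) - 1) * Y t
          + t ^ (-((N : ℝ) / 2)) * (b t - 4 * b (4 * t))) t :=
        (Real.hasDerivAt_rpow_const (Or.inl t0.ne')).mul (Yd t)
      rw [h1.deriv]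
      simp only [hq, hb]
      rw [Real.mul_rpow (by norm_num) ht]
      have e1 : t ^ (-((N : ℝ) / 2) - 1) = t ^ (-((N : ℝ) / 2)) / t := by
        rw [rpow_sub t0, rpow_one]
      have e2 : t ^ ((N : ℝ) / 2 - 1) = t ^ ((N : ℝ) / 2) / t := by
        rw [rpow_sub t0, rpow_one]
      have e3 : (4:ℝ) ^ ((N : ℝ) / 2 - 1) = 2 ^ N / 4 := by
        rw [rpow_sub (by norm_num), rpow_one]
        congr 1
        rw [show (4:ℝ) = 2 ^ (2:ℝ) by norm_num, ← rpow_mul (by norm_num)]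
        rw [show (2:ℝ) * (N / 2) = N by ring, rpow_natCast]
      have e4 : t ^ (-((N : ℝ) / 2)) = (t ^ ((N : ℝ) / 2))⁻¹ := rpow_neg ht _
      have e5 : t ^ ((N : ℝ) / 2) ≠ 0 := (rpow_pos_of_pos t0 _).ne'
      rw [e1, e2, e3, e4]
      field_simp
      ring
  have nsd : ContDiff ℝ 2 (fun y : RN N => ‖y‖ ^ 2) := contDiff_norm_sq ℝ
  refine ⟨⟨fun y => k (‖y‖ ^ 2), fun y => kE (‖y‖ ^ 2), kdiff.comp nsd, ?_, ?_, kE_diff.comp nsd,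
    fun y => kE_nonneg _, ?_, ?_, ?_⟩⟩
  · intro y
    rcases le_total (‖y‖ ^ 2) 1 with h | h
    · simp only [hk]
      rw [intervalIntegral.integral_symm, ← intervalIntegral.integral_neg]
      exact intervalIntegral.integral_nonneg h (fun u _ => by linarith [qnp u])
    · simp only [hk]
      rw [intervalIntegral.integral_congr (g := fun _ => 0)]
      · simp
      · intro s hs
        rw [uIcc_of_le h] at hs
        exact q1 s hs.1
  · intro y hy
    have h : 1 ≤ ‖y‖ ^ 2 := one_le_pow₀ hy
    simp only [hk]
    rw [intervalIntegral.integral_congr (g := fun _ => 0)]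
    · simp
    · intro s hs
      rw [uIcc_of_le h] at hs
      exact q1 s hs.1
  · intro y hy
    exact kE_right (one_le_pow₀ hy)
  · intro y h1 h2
    exact kE_pos (by nlinarith) (by nlinarith)
  · intro y
    rw [lapl_comp kd qd nsd.contDiffAt, lapl_normSq]
    simp_rw [pd_normSq]
    have : ∑ i, (2 * y i) ^ 2 = 4 * ‖y‖ ^ 2 := by
      rw [EuclideanSpace.norm_sq_eq, Finset.mul_sum]
      apply Finset.sum_congr rfl
      intro i _
      rw [Real.norm_eq_abs, sq_abs]; ring
    rw [this]
    have h4 : ‖(2:ℝ) • y‖ ^ 2 = 4 * ‖y‖ ^ 2 := by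
      rw [norm_smul]; norm_num; ring
    rw [h4, ← key _ (by positivity)]
    ring

section Conv

variable {N : ℕ} {F : Type*} [NormedAddCommGroup F] [NormedSpace ℝ F]

/-- Convolution of a scalar kernel with a vector valued function. -/
def cv (g : RN N → ℝ) (h : RN N → F) : RN N → F :=
  convolution g h (ContinuousLinearMap.lsmul ℝ ℝ) volume

lemma cv_apply (g : RN N → ℝ) (h : RN N → F) (x : RN N) : cv g h x = ∫ t, g t • h (x - t) := rfl

lemma cv_swap (g : RN N → ℝ) (h : RN N → F) (x : RN N) : cv g h x = ∫ z, g (x - z) • h z := by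
  rw [cv_apply, ← integral_sub_left_eq_self _ volume x]
  simp

/-- dyadic rescaling -/
def sc (n : ℕ) (g : RN N → ℝ) (t : RN N) : ℝ := ((2:ℝ) ^ n) ^ N * g ((2:ℝ) ^ n • t)

lemma integral_sc {E : Type*} [NormedAddCommGroup E] [NormedSpace ℝ E] (n : ℕ) (g : RN N → E) :
    ∫ t, (((2:ℝ) ^ n) ^ N) • g ((2:ℝ) ^ n • t) = ∫ t, g t := by
  rw [integral_smul, Measure.integral_comp_smul]
  simp only [finrank_euclideanSpace, Fintype.card_fin]
  rw [abs_of_pos (by positivity), smul_smul, mul_inv_cancel₀ (by positivity), one_smul]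

lemma sc_int (n : ℕ) (g : RN N → ℝ) : ∫ t, sc n g t = ∫ t, g t := integral_sc n g

lemma sc_int_abs (n : ℕ) (g : RN N → ℝ) : ∫ t, |sc n g t| = ∫ t, |g t| := by
  rw [← integral_sc n (fun t => |g t|)]
  congr 1; ext t
  rw [sc, abs_mul, abs_of_pos (by positivity)]; rfl

lemma sc_contDiff {m : WithTop ℕ∞} (n : ℕ) {g : RN N → ℝ} (hg : ContDiff ℝ m g) :
    ContDiff ℝ m (sc n g) :=
  contDiff_const.mul (hg.comp (contDiff_const_smul _))

lemma sc_off (n : ℕ) {g : RN N → ℝ} (hg : ∀ y, 1 ≤ ‖y‖ → g y = 0) {y : RN N}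
    (hy : (1 / 2 : ℝ) ^ n ≤ ‖y‖) : sc n g y = 0 := by
  rw [sc, hg, mul_zero]
  rw [norm_smul, Real.norm_of_nonneg (by positivity)]
  have : (2:ℝ) ^ n * (1 / 2) ^ n = 1 := by rw [← mul_pow]; norm_num
  rw [← this]; gcongr

lemma sc_compact (n : ℕ) {g : RN N → ℝ} (hg : ∀ y, 1 ≤ ‖y‖ → g y = 0) :
    HasCompactSupport (sc n g) := by
  refine HasCompactSupport.of_support_subset_isCompact
    (isCompact_closedBall (0 : RN N) ((1 / 2 : ℝ) ^ n)) ?_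
  intro y hy
  by_contra h
  apply hy
  apply sc_off n hg
  simp at h
  simpa using h.le

lemma cv_bound {g : RN N → ℝ} (hg : Integrable g) {h : RN N → F} {M : ℝ}
    (hM : ∀ x, ‖h x‖ ≤ M) (x : RN N) : ‖cv g h x‖ ≤ (∫ t, |g t|) * M := by
  rw [cv_apply, ← integral_mul_const]
  refine norm_integral_le_of_norm_le (hg.abs.mul_const M) (Eventually.of_forall fun t => ?_)
  rw [norm_smul]
  exact mul_le_mul_of_nonneg_left (hM _) (norm_nonneg _)

lemma cv_contDiff {n : ℕ∞} {g : RN N → ℝ} (hg : HasCompactSupport g) (hd : ContDiff ℝ n g)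
    {h : RN N → F} (hh : LocallyIntegrable h) : ContDiff ℝ n (cv g h) :=
  hg.contDiff_convolution_left _ hd hh

lemma cv_fderiv_bound {g : RN N → ℝ} (hg : HasCompactSupport g) (hd : ContDiff ℝ 1 g)
    {h : RN N → F} (hh : LocallyIntegrable h) {M : ℝ}
    (hM : ∀ x, ‖h x‖ ≤ M) (x : RN N) :
    ‖fderiv ℝ (cv g h) x‖ ≤ (∫ t, ‖fderiv ℝ g t‖) * M := by
  have := hg.hasFDerivAt_convolution_left (ContinuousLinearMap.lsmul ℝ ℝ) hd hh x
  rw [show fderiv ℝ (cv g h) x = _ from this.fderiv]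
  rw [convolution, ← integral_mul_const]
  have hi : Integrable (fderiv ℝ g) :=
    (hd.continuous_fderiv (by norm_num)).integrable_of_hasCompactSupport (hg.fderiv ℝ)
  refine norm_integral_le_of_norm_le (hi.norm.mul_const M) (Eventually.of_forall fun t => ?_)
  refine (ContinuousLinearMap.le_opNorm₂ _ _ _).trans ?_
  refine mul_le_mul ?_ (hM _) (norm_nonneg _) (norm_nonneg _)
  have h1 := ContinuousLinearMap.norm_precompL_le (RN N)
    (ContinuousLinearMap.lsmul ℝ ℝ (E := F))
  have h2 := ContinuousLinearMap.opNorm_lsmul_le (𝕜 := ℝ) (R := ℝ) (E := F)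
  exact mul_le_of_le_one_left (norm_nonneg _) (h1.trans h2)

lemma sc_fderiv_int (n : ℕ) {g : RN N → ℝ} (hd : ContDiff ℝ 1 g) :
    ∫ t, ‖fderiv ℝ (sc n g) t‖ = 2 ^ n * ∫ t, ‖fderiv ℝ g t‖ := by
  have : ∀ t, ‖fderiv ℝ (sc n g) t‖ =
      ((2:ℝ) ^ n) ^ N • (2 ^ n * ‖fderiv ℝ g ((2:ℝ) ^ n • t)‖) := by
    intro t
    have hdd := (hd.differentiable (by norm_num) ((2:ℝ) ^ n • t)).hasFDerivAt
    have h1 : HasFDerivAt (fun t : RN N => (2:ℝ) ^ n • t)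
      ((2:ℝ) ^ n • ContinuousLinearMap.id ℝ (RN N)) t := (hasFDerivAt_id t).fun_const_smul _
    have h2 : HasFDerivAt (sc n g) _ t := (hdd.comp t h1).const_mul (((2:ℝ) ^ n) ^ N)
    rw [h2.fderiv]
    rw [ContinuousLinearMap.comp_smul, ContinuousLinearMap.comp_id, norm_smul, norm_smul]
    simp
  simp_rw [this]
  rw [integral_sc n (fun t => 2 ^ n * ‖fderiv ℝ g t‖), integral_const_mul]

lemma cv_hasFDerivAt_right {g : RN N → ℝ} (hg : LocallyIntegrable g) {H : RN N → ℝ}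
    (hc : HasCompactSupport H) (hH : ContDiff ℝ 1 H) (x : RN N) :
    HasFDerivAt (cv g H) (cv g (fderiv ℝ H) x) x := by
  have := hc.hasFDerivAt_convolution_right (ContinuousLinearMap.lsmul ℝ ℝ) hg hH x
  exact this

/-- the potential series -/
def SS (κ : RN N → ℝ) (n : ℕ) (h : RN N → F) (x : RN N) : F :=
  ∑' k : ℕ, ((1 / 4 : ℝ) ^ (n + k)) • cv (sc (n + k) κ) h x

lemma summable_aux (n : ℕ) (c : ℝ) : Summable (fun k : ℕ => (1 / 2 : ℝ) ^ (n + k) * c) := by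
  simp_rw [pow_add]
  exact ((summable_geometric_of_lt_one (by norm_num) (by norm_num)).mul_left _).mul_right _

variable [CompleteSpace F]

lemma SS_facts {κ : RN N → ℝ} (hκ : ContDiff ℝ 2 κ) (hκ0 : ∀ y, 1 ≤ ‖y‖ → κ y = 0) (n : ℕ)
    {h : RN N → F} (hh : LocallyIntegrable h) {M : ℝ} (hM : ∀ x, ‖h x‖ ≤ M) :
    (∀ x, Summable fun k : ℕ => ((1 / 4 : ℝ) ^ (n + k)) • cv (sc (n + k) κ) h x) ∧
    ContDiff ℝ 1 (SS κ n h) ∧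
    (∀ x, ‖fderiv ℝ (SS κ n h) x‖ ≤ 2 * (∫ t, ‖fderiv ℝ κ t‖) * M) := by
  have cs : ∀ k, HasCompactSupport (sc k κ) := fun k => sc_compact k hκ0
  have h1 : ContDiff ℝ 1 κ := hκ.of_le (by norm_num)
  have cd : ∀ k, ContDiff ℝ 1 (sc k κ) := fun k => sc_contDiff k h1
  have M0 : 0 ≤ M := (norm_nonneg _).trans (hM 0)
  have td : ∀ k, ContDiff ℝ 1 (fun x => ((1 / 4 : ℝ) ^ (n + k)) • cv (sc (n + k) κ) h x) :=
    fun k => contDiff_const.smul (cv_contDiff (n := 1) (cs _) (cd _) hh)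
  have b0 : ∀ k x, ‖((1 / 4 : ℝ) ^ (n + k)) • cv (sc (n + k) κ) h x‖ ≤
      (1 / 2 : ℝ) ^ (n + k) * ((∫ t, |κ t|) * M) := by
    intro k x
    rw [norm_smul, Real.norm_of_nonneg (by positivity)]
    have := cv_bound ((cd (n + k)).continuous.integrable_of_hasCompactSupport (cs _)) hM x
    rw [sc_int_abs] at this
    refine mul_le_mul ?_ this (norm_nonneg _) (by positivity)
    exact pow_le_pow_left₀ (by norm_num) (by norm_num) _
  have b1 : ∀ k x, ‖fderiv ℝ (fun x => ((1 / 4 : ℝ) ^ (n + k)) • cv (sc (n + k) κ) h x) x‖ ≤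
      (1 / 2 : ℝ) ^ (n + k) * ((∫ t, ‖fderiv ℝ κ t‖) * M) := by
    intro k x
    have hdf : DifferentiableAt ℝ (cv (sc (n + k) κ) h) x :=
      (cv_contDiff (n := 1) (cs _) (cd _) hh).differentiable (by norm_num) x
    rw [fderiv_fun_const_smul hdf, norm_smul, Real.norm_of_nonneg (by positivity)]
    have := cv_fderiv_bound (cs (n + k)) (cd _) hh hM x
    rw [sc_fderiv_int _ h1] at this
    calc _ ≤ (1 / 4 : ℝ) ^ (n + k) * (2 ^ (n + k) * (∫ t, ‖fderiv ℝ κ t‖) * M) := by gcongr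
      _ = ((1 / 4 : ℝ) ^ (n + k) * 2 ^ (n + k)) * ((∫ t, ‖fderiv ℝ κ t‖) * M) := by ring
      _ = _ := by rw [← mul_pow]; norm_num
  have sm : ∀ x, Summable fun k : ℕ => ((1 / 4 : ℝ) ^ (n + k)) • cv (sc (n + k) κ) h x :=
    fun x => Summable.of_norm_bounded (summable_aux n _) (fun k => b0 k x)
  have hfd : ∀ x, HasFDerivAt (SS κ n h)
      (∑' k : ℕ, fderiv ℝ (fun x => ((1 / 4 : ℝ) ^ (n + k)) • cv (sc (n + k) κ) h x) x) x := by
    intro x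
    refine hasFDerivAt_tsum (summable_aux n _) (fun k y =>
      ((td k).differentiable (by norm_num) y).hasFDerivAt) b1 (sm 0) x
  refine ⟨sm, ?_, ?_⟩
  · rw [contDiff_one_iff_fderiv]
    refine ⟨fun x => (hfd x).differentiableAt, ?_⟩
    rw [show fderiv ℝ (SS κ n h) = _ from funext fun x => (hfd x).fderiv]
    exact continuous_tsum (fun k => (td k).continuous_fderiv (by norm_num)) (summable_aux n _) b1
  · intro x
    rw [(hfd x).fderiv]
    refine (tsum_of_norm_bounded (summable_aux n _).hasSum (fun k => b1 k x)).trans ?_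
    rw [tsum_mul_right]
    have : ∑' k : ℕ, (1 / 2 : ℝ) ^ (n + k) ≤ 2 := by
      simp_rw [pow_add]
      rw [tsum_mul_left, tsum_geometric_two]
      have : (1 / 2 : ℝ) ^ n ≤ 1 := pow_le_one₀ (by norm_num) (by norm_num)
      linarith
    have h3 : 0 ≤ ∫ t, ‖fderiv ℝ κ t‖ := integral_nonneg fun _ => norm_nonneg _
    calc _ ≤ 2 * ((∫ t, ‖fderiv ℝ κ t‖) * M) := by gcongr
      _ = _ := by ring

lemma SS_contDiff_two {κ : RN N → ℝ} (hκ : ContDiff ℝ 2 κ) (hκ0 : ∀ y, 1 ≤ ‖y‖ → κ y = 0) (n : ℕ)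
    {H : RN N → ℝ} (hc : HasCompactSupport H) (hH : ContDiff ℝ 1 H) :
    ContDiff ℝ 2 (SS κ n H) := by
  have cs : ∀ k, HasCompactSupport (sc k κ) := fun k => sc_compact k hκ0
  have h1 : ContDiff ℝ 1 κ := hκ.of_le (by norm_num)
  have cd : ∀ k, ContDiff ℝ 1 (sc k κ) := fun k => sc_contDiff k h1
  obtain ⟨M, hM⟩ := hc.exists_bound_of_continuous hH.continuous
  have cf : Continuous (fderiv ℝ H) := hH.continuous_fderiv (by norm_num)
  obtain ⟨M', hM'⟩ := (hc.fderiv ℝ).exists_bound_of_continuous cf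
  obtain ⟨s1, -, -⟩ := SS_facts hκ hκ0 n hH.continuous.locallyIntegrable hM
  obtain ⟨s2, d2, -⟩ := SS_facts hκ hκ0 n cf.locallyIntegrable hM'
  have key : ∀ x, HasFDerivAt (SS κ n H) (SS κ n (fderiv ℝ H) x) x := by
    intro x
    refine hasFDerivAt_tsum (u := fun k => (1 / 2 : ℝ) ^ (n + k) * ((∫ t, |κ t|) * M'))
      (f := fun k x => ((1 / 4 : ℝ) ^ (n + k)) • cv (sc (n + k) κ) H x)
      (f' := fun k x => ((1 / 4 : ℝ) ^ (n + k)) • cv (sc (n + k) κ) (fderiv ℝ H) x)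
      (summable_aux n _) (fun k y => ?_) ?_ (s1 0) x
    · exact (cv_hasFDerivAt_right ((cd _).continuous.locallyIntegrable) hc hH y).fun_const_smul _
    · intro k x
      rw [norm_smul, Real.norm_of_nonneg (by positivity)]
      have := cv_bound ((cd (n + k)).continuous.integrable_of_hasCompactSupport (cs _)) hM' x
      rw [sc_int_abs] at this
      refine mul_le_mul ?_ this (norm_nonneg _) (by positivity)
      exact pow_le_pow_left₀ (by norm_num) (by norm_num) _
  rw [show (2 : WithTop ℕ∞) = 1 + 1 by norm_num, contDiff_succ_iff_fderiv]
  refine ⟨fun x => (key x).differentiableAt, by simp, ?_⟩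
  rw [show fderiv ℝ (SS κ n H) = SS κ n (fderiv ℝ H) from funext fun x => (key x).fderiv]
  exact d2

end Conv

section MV
variable {N : ℕ} (K : Ker N) {Ω : Set (RN N)} {w h : RN N → ℝ}

/-- total mass of the averaging kernel -/
def Ker.m : ℝ := ∫ t, K.η t

lemma Ker.m_pos (hN : 1 ≤ N) : 0 < K.m := by
  have hc : HasCompactSupport K.η := by
    have := sc_compact 0 K.η_off
    have e : sc 0 K.η = K.η := by ext y; simp [sc]
    rwa [e] at this
  refine K.η_diff.continuous.integral_pos_of_hasCompactSupport_nonneg_nonzero hc K.η_nonneg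
    (x := EuclideanSpace.single (⟨0, hN⟩ : Fin N) (3 / 4 : ℝ)) ?_
  have e : ‖(EuclideanSpace.single (⟨0, hN⟩ : Fin N) (3 / 4 : ℝ) : RN N)‖ = 3 / 4 := by
    rw [EuclideanSpace.norm_single]; norm_num
  exact (K.η_pos _ (by rw [e]; norm_num) (by rw [e]; norm_num)).ne'

lemma sc_nonneg (n : ℕ) {g : RN N → ℝ} (hg : ∀ y, 0 ≤ g y) (y : RN N) : 0 ≤ sc n g y :=
  mul_nonneg (by positivity) (hg _)

lemma mv_step {n : ℕ} {x : RN N} (hw : WeakSol Ω w h) (hwl : LocallyIntegrable w)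
    (hb : Metric.closedBall x ((1 / 2 : ℝ) ^ n) ⊆ Ω) :
    cv (sc (n + 1) K.η) w x - cv (sc n K.η) w x = (1 / 4 : ℝ) ^ n • cv (sc n K.κ) h x := by
  set ψ : RN N → ℝ := fun z => K.κ ((2:ℝ) ^ n • (x - z)) with hψ
  have sub : Function.support ψ ⊆ Metric.closedBall x ((1 / 2 : ℝ) ^ n) := by
    intro z hz
    by_contra hcon
    apply hz
    have := sc_off n K.κ_off (y := x - z) (by
      simp only [Metric.mem_closedBall, not_le, dist_comm z x, dist_eq_norm] at hcon
      exact hcon.le)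
    simpa [sc] using this
  have tsub : tsupport ψ ⊆ Metric.closedBall x ((1 / 2 : ℝ) ^ n) :=
    closure_minimal sub Metric.isClosed_closedBall
  have ht : ψ ∈ TestFn Ω := by
    refine ⟨K.κ_diff.comp ((contDiff_const_smul _).comp (contDiff_const.sub contDiff_id)), ?_,
      tsub.trans hb⟩
    exact HasCompactSupport.of_support_subset_isCompact (isCompact_closedBall _ _) sub
  have key := hw ψ ht
  have h2 : ∀ z, lapl ψ z = ((2:ℝ) ^ n) ^ 2 * (K.η ((2:ℝ) ^ n • (x - z))
      - 2 ^ N * K.η ((2:ℝ) ^ (n + 1) • (x - z))) := by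
    intro z
    rw [hψ, lapl_scale K.κ_diff, K.lap, smul_smul, pow_succ' 2 n]
  have s0 : ((2:ℝ) ^ n) ^ N ≠ 0 := by positivity
  have p4 : ((2:ℝ) ^ n) ^ 2 * (1 / 4) ^ n = 1 := by
    rw [← pow_mul, mul_comm n 2, pow_mul, ← mul_pow]; norm_num
  have ex : ∀ k, Integrable (fun z => sc k K.η (x - z) * w z) := by
    intro k
    have := (sc_compact k K.η_off).convolutionExists_left (ContinuousLinearMap.lsmul ℝ ℝ)
      (sc_contDiff k K.η_diff).continuous hwl x
    have := this.integrable_swap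
    exact this
  rw [cv_swap, cv_swap, cv_swap]
  simp only [smul_eq_mul]
  rw [← integral_sub (ex _) (ex _)]
  have e1 : ∀ z, sc (n + 1) K.η (x - z) * w z - sc n K.η (x - z) * w z =
      -((1 / 4) ^ n * ((2:ℝ) ^ n) ^ N) * (w z * lapl ψ z) := by
    intro z
    rw [h2]
    simp only [sc]
    have : ((2:ℝ) ^ (n + 1)) ^ N = ((2:ℝ) ^ n) ^ N * 2 ^ N := by rw [pow_succ, mul_pow]
    rw [this]
    linear_combination (-((2:ℝ) ^ n) ^ N * w z * (2 ^ N * K.η ((2:ℝ) ^ (n + 1) • (x - z)) -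
      K.η ((2:ℝ) ^ n • (x - z)))) * p4
  simp_rw [e1]
  rw [integral_const_mul, key]
  have e2 : ∀ z, sc n K.κ (x - z) * h z = ((2:ℝ) ^ n) ^ N * (h z * ψ z) := by
    intro z; simp only [sc, hψ]; ring
  simp_rw [e2]
  rw [integral_const_mul]
  ring

variable {B : ℝ}

lemma mv_tendsto {n : ℕ} {x : RN N} (hw : WeakSol Ω w h) (hwl : LocallyIntegrable w)
    (hhl : LocallyIntegrable h) (hB : ∀ x, |h x| ≤ B)
    (hb : Metric.closedBall x ((1 / 2 : ℝ) ^ n) ⊆ Ω) :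
    Tendsto (fun k => cv (sc k K.η) w x) atTop (𝓝 (cv (sc n K.η) w x + SS K.κ n h x)) := by
  rw [← tendsto_add_atTop_iff_nat n]
  have hs := ((SS_facts K.κ_diff K.κ_off n hhl (M := B) hB).1 x).hasSum.tendsto_sum_nat
  have e : ∀ k, cv (sc (k + n) K.η) w x = cv (sc n K.η) w x +
      ∑ i ∈ Finset.range k, (1 / 4 : ℝ) ^ (n + i) • cv (sc (n + i) K.κ) h x := by
    intro k
    induction k with
    | zero => simp
    | succ k ih =>
      rw [Finset.sum_range_succ, ← add_assoc, ← ih]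
      have := mv_step K hw hwl (n := n + k) (x := x) (by
        refine (Metric.closedBall_subset_closedBall ?_).trans hb
        exact pow_le_pow_of_le_one (by norm_num) (by norm_num) (by omega))
      rw [← this, show k + 1 + n = n + k + 1 by ring, show k + n = n + k by ring]
      ring
  simp_rw [e]
  exact hs.const_add _

/-- the good representative -/
def rep (w : RN N → ℝ) (x : RN N) : ℝ :=
  K.m⁻¹ * limUnder atTop (fun k => cv (sc k K.η) w x)

lemma rep_eq {n : ℕ} {x : RN N} (hw : WeakSol Ω w h) (hwl : LocallyIntegrable w)
    (hhl : LocallyIntegrable h) (hB : ∀ x, |h x| ≤ B)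
    (hb : Metric.closedBall x ((1 / 2 : ℝ) ^ n) ⊆ Ω) :
    rep K w x = K.m⁻¹ * (cv (sc n K.η) w x + SS K.κ n h x) := by
  rw [rep, (mv_tendsto K hw hwl hhl hB hb).limUnder_eq]

lemma sc_eta_int (k : ℕ) : Integrable (sc k K.η) :=
  (sc_contDiff k K.η_diff).continuous.integrable_of_hasCompactSupport (sc_compact k K.η_off)

lemma cv_sub_eq (hwl : LocallyIntegrable w) (k : ℕ) (x : RN N) :
    cv (sc k K.η) w x - K.m * w x = ∫ z, sc k K.η (x - z) * (w z - w x) := by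
  have ex : Integrable (fun z => sc k K.η (x - z) * w z) := by
    have := (sc_compact k K.η_off).convolutionExists_left (ContinuousLinearMap.lsmul ℝ ℝ)
      (sc_contDiff k K.η_diff).continuous hwl x
    have := this.integrable_swap
    exact this
  have e2 : Integrable (fun z => sc k K.η (x - z)) := (sc_eta_int K k).comp_sub_left x
  simp_rw [mul_sub]
  rw [integral_sub ex (e2.mul_const _), cv_swap, integral_mul_const,
    integral_sub_left_eq_self (sc k K.η) volume x, sc_int]
  rfl

lemma cv_tendsto_of_continuousAt (hwl : LocallyIntegrable w) {x : RN N} (hc : ContinuousAt w x) :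
    Tendsto (fun k => cv (sc k K.η) w x) atTop (𝓝 (K.m * w x)) := by
  rw [Metric.tendsto_atTop]
  intro ε hε
  have m0 : 0 ≤ K.m := integral_nonneg K.η_nonneg
  obtain ⟨δ, hδ, hδ'⟩ := Metric.continuousAt_iff.1 hc (ε / (K.m + 1)) (by positivity)
  obtain ⟨n, hn⟩ := exists_pow_lt_of_lt_one hδ (by norm_num : (1 / 2 : ℝ) < 1)
  refine ⟨n, fun k hk => ?_⟩
  rw [Real.dist_eq, cv_sub_eq K hwl]
  have e2 : Integrable (fun z => sc k K.η (x - z)) := (sc_eta_int K k).comp_sub_left x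
  have : ‖∫ z, sc k K.η (x - z) * (w z - w x)‖ ≤ ∫ z, sc k K.η (x - z) * (ε / (K.m + 1)) := by
    refine norm_integral_le_of_norm_le (e2.mul_const _) (Eventually.of_forall fun z => ?_)
    rw [norm_mul, Real.norm_of_nonneg (sc_nonneg k K.η_nonneg _)]
    by_cases hz : (1 / 2 : ℝ) ^ k ≤ ‖x - z‖
    · rw [sc_off k K.η_off hz]; simp
    · refine mul_le_mul_of_nonneg_left ?_ (sc_nonneg k K.η_nonneg _)
      have h1 : (1 / 2 : ℝ) ^ k ≤ (1 / 2) ^ n :=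
        pow_le_pow_of_le_one (by norm_num) (by norm_num) hk
      have := hδ' (x := z) (by rw [dist_comm, dist_eq_norm]; linarith)
      rw [← dist_eq_norm]; exact this.le
  rw [integral_mul_const, integral_sub_left_eq_self (sc k K.η) volume x, sc_int] at this
  refine this.trans_lt ?_
  change K.m * (ε / (K.m + 1)) < ε
  rw [mul_div_assoc', div_lt_iff₀ (by positivity)]
  nlinarith

lemma cv_tendsto_ae (hwl : LocallyIntegrable w) :
    ∀ᵐ x, Tendsto (fun k => cv (sc k K.η) w x) atTop (𝓝 (K.m * w x)) := by
  filter_upwards [(Besicovitch.vitaliFamily (volume : Measure (RN N))).ae_tendsto_average_norm_sub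
    hwl] with x hx
  have t0 : Tendsto (fun k : ℕ => (1 / 2 : ℝ) ^ k) atTop (𝓝[>] 0) := by
    refine tendsto_nhdsWithin_iff.2 ⟨tendsto_pow_atTop_nhds_zero_of_lt_one (by norm_num)
      (by norm_num), Eventually.of_forall fun k => ?_⟩
    show (0:ℝ) < _
    positivity
  have hx2 := (hx.comp (Besicovitch.tendsto_filterAt volume x)).comp t0
  obtain ⟨C, hC⟩ := (K.η_diff.continuous.bounded_above_of_compact_support (by
    have := sc_compact 0 K.η_off
    have e : sc 0 K.η = K.η := by ext y; simp [sc]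
    rwa [e] at this))
  have C0 : 0 ≤ C := (norm_nonneg _).trans (hC 0)
  set V := (volume (Metric.closedBall (0 : RN N) 1)).toReal with hV
  rw [tendsto_iff_norm_sub_tendsto_zero]
  have hx3 := hx2.const_mul (C * V)
  rw [mul_zero] at hx3
  refine squeeze_zero (fun _ => norm_nonneg _) (fun k => ?_) hx3
  rw [cv_sub_eq K hwl]
  have hvol : volume.real (Metric.closedBall x ((1 / 2 : ℝ) ^ k)) = ((1 / 2 : ℝ) ^ k) ^ N * V := by
    rw [measureReal_def, Measure.addHaar_closedBall' _ _ (by positivity)]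
    rw [ENNReal.toReal_mul, ENNReal.toReal_ofReal (by positivity)]
    simp [hV]
  have hIntg : IntegrableOn (fun z => ‖w z - w x‖) (Metric.closedBall x ((1 / 2 : ℝ) ^ k)) := by
    have h1 : IntegrableOn w (Metric.closedBall x ((1 / 2 : ℝ) ^ k)) :=
      hwl.integrableOn_isCompact (isCompact_closedBall _ _)
    have h2 : IntegrableOn (fun _ => w x) (Metric.closedBall x ((1 / 2 : ℝ) ^ k)) :=
      integrableOn_const (measure_closedBall_lt_top.ne)
    exact (h1.sub h2).norm
  have hm := (Metric.isClosed_closedBall (x := x) (ε := (1 / 2 : ℝ) ^ k)).measurableSet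
  have : ‖∫ z, sc k K.η (x - z) * (w z - w x)‖ ≤
      ∫ z, (Metric.closedBall x ((1 / 2 : ℝ) ^ k)).indicator
        (fun z => ((2:ℝ) ^ k) ^ N * C * ‖w z - w x‖) z := by
    refine norm_integral_le_of_norm_le ((integrable_indicator_iff hm).2 (hIntg.const_mul _))
      (Eventually.of_forall fun z => ?_)
    by_cases hz : z ∈ Metric.closedBall x ((1 / 2 : ℝ) ^ k)
    · rw [indicator_of_mem hz, norm_mul]
      refine mul_le_mul_of_nonneg_right ?_ (norm_nonneg _)
      rw [sc, norm_mul, Real.norm_of_nonneg (by positivity)]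
      exact mul_le_mul_of_nonneg_left (hC _) (by positivity)
    · rw [indicator_of_notMem hz, sc_off k K.η_off]
      · simp
      · simp only [Metric.mem_closedBall, not_le, dist_comm z x, dist_eq_norm] at hz
        exact hz.le
  refine this.trans ?_
  rw [integral_indicator hm, integral_const_mul]
  simp only [Function.comp]
  rw [setAverage_eq, hvol, smul_eq_mul]
  have V0 : 0 < V := ENNReal.toReal_pos (Metric.measure_closedBall_pos _ _ one_pos).ne'
    measure_closedBall_lt_top.ne
  have : ((2:ℝ) ^ k) ^ N = (((1 / 2 : ℝ) ^ k) ^ N)⁻¹ := by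
    rw [one_div, inv_pow, inv_pow, inv_inv]
  rw [this]
  apply le_of_eq
  field_simp

lemma rep_ae (hN : 1 ≤ N) (hwl : LocallyIntegrable w) : ∀ᵐ x, rep K w x = w x := by
  filter_upwards [cv_tendsto_ae K hwl] with x hx
  rw [rep, hx.limUnder_eq, inv_mul_cancel_left₀ (K.m_pos hN).ne']

lemma rep_of_continuousAt (hN : 1 ≤ N) (hwl : LocallyIntegrable w) {x : RN N}
    (hc : ContinuousAt w x) : rep K w x = w x := by
  rw [rep, (cv_tendsto_of_continuousAt K hwl hc).limUnder_eq,
    inv_mul_cancel_left₀ (K.m_pos hN).ne']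

end MV

section Reg
variable {N : ℕ} (K : Ker N) {Ω : Set (RN N)} {w h : RN N → ℝ} {B B' : ℝ}

lemma exists_dyadic (hΩ : IsOpen Ω) {x : RN N} (hx : x ∈ Ω) :
    ∃ n : ℕ, Metric.closedBall x (2 * (1 / 2 : ℝ) ^ n) ⊆ Ω := by
  obtain ⟨ε, hε, h⟩ := Metric.isOpen_iff.1 hΩ x hx
  obtain ⟨n, hn⟩ := exists_pow_lt_of_lt_one (half_pos hε) (by norm_num : (1 / 2 : ℝ) < 1)
  exact ⟨n, (Metric.closedBall_subset_ball (by linarith)).trans h⟩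

lemma dyadic_ball_sub {n : ℕ} {x y : RN N} (h : Metric.closedBall x (2 * (1 / 2 : ℝ) ^ n) ⊆ Ω)
    (hy : y ∈ Metric.ball x ((1 / 2 : ℝ) ^ n)) : Metric.closedBall y ((1 / 2 : ℝ) ^ n) ⊆ Ω := by
  refine (Metric.closedBall_subset_closedBall' ?_).trans h
  have := Metric.mem_ball.1 hy
  linarith

lemma locInt_of_bdd (hm : AEStronglyMeasurable h) (hB : ∀ x, |h x| ≤ B) :
    LocallyIntegrable h := by
  intro x
  refine ⟨Metric.ball x 1, Metric.ball_mem_nhds _ one_pos, ?_⟩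
  refine ⟨hm.restrict, ?_⟩
  exact HasFiniteIntegral.restrict_of_bounded B measure_ball_lt_top (Eventually.of_forall hB)

lemma cv_eta_contDiff (n : ℕ) (hwl : LocallyIntegrable w) : ContDiff ℝ 2 (cv (sc n K.η) w) :=
  cv_contDiff (n := 2) (sc_compact n K.η_off) (sc_contDiff n K.η_diff) hwl

lemma rep_contDiff_one (hΩ : IsOpen Ω) (hw : WeakSol Ω w h) (hwl : LocallyIntegrable w)
    (hhl : LocallyIntegrable h) (hB : ∀ x, |h x| ≤ B) : ContDiffOn ℝ 1 (rep K w) Ω := by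
  intro x hx
  apply ContDiffAt.contDiffWithinAt
  obtain ⟨n, hn⟩ := exists_dyadic hΩ hx
  have e : rep K w =ᶠ[𝓝 x] fun y => K.m⁻¹ * (cv (sc n K.η) w y + SS K.κ n h y) := by
    filter_upwards [Metric.ball_mem_nhds x (by positivity : 0 < (1 / 2 : ℝ) ^ n)] with y hy
    exact rep_eq K hw hwl hhl hB (dyadic_ball_sub hn hy)
  refine ContDiffAt.congr_of_eventuallyEq ?_ e
  exact (contDiff_const.mul (((cv_eta_contDiff K n hwl).of_le (by norm_num)).add
    (SS_facts K.κ_diff K.κ_off n hhl hB).2.1)).contDiffAt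

lemma rep_lip (hN : 1 ≤ N) {n : ℕ} {x0 : RN N}
    (hn : Metric.closedBall x0 (2 * (1 / 2 : ℝ) ^ n) ⊆ Ω) (hw : WeakSol Ω w h)
    (hwl : LocallyIntegrable w) (hhl : LocallyIntegrable h) (hB : ∀ x, |h x| ≤ B)
    (hB' : ∀ x, |w x| ≤ B') {x y : RN N} (hx : x ∈ Metric.ball x0 ((1 / 2 : ℝ) ^ n))
    (hy : y ∈ Metric.ball x0 ((1 / 2 : ℝ) ^ n)) :
    |rep K w x - rep K w y| ≤ K.m⁻¹ * ((2 ^ n * ∫ t, ‖fderiv ℝ K.η t‖) * B' +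
      2 * (∫ t, ‖fderiv ℝ K.κ t‖) * B) * ‖x - y‖ := by
  have h1 : ContDiff ℝ 1 (cv (sc n K.η) w) := (cv_eta_contDiff K n hwl).of_le (by norm_num)
  obtain ⟨-, h2, h3⟩ := SS_facts K.κ_diff K.κ_off n hhl hB
  rw [rep_eq K hw hwl hhl hB (dyadic_ball_sub hn hx), rep_eq K hw hwl hhl hB (dyadic_ball_sub hn hy)]
  have h4 : ∀ z, ‖fderiv ℝ (cv (sc n K.η) w) z‖ ≤ (2 ^ n * ∫ t, ‖fderiv ℝ K.η t‖) * B' := by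
    intro z
    have := cv_fderiv_bound (sc_compact n K.η_off)
      (sc_contDiff n (K.η_diff.of_le (by norm_num))) hwl hB' z
    rwa [sc_fderiv_int n (K.η_diff.of_le (by norm_num))] at this
  have a1 := Convex.norm_image_sub_le_of_norm_fderiv_le (𝕜 := ℝ) (f := cv (sc n K.η) w)
    (fun z _ => h1.differentiable (by norm_num) z) (fun z _ => h4 z) convex_univ
    (mem_univ y) (mem_univ x)
  have a2 := Convex.norm_image_sub_le_of_norm_fderiv_le (𝕜 := ℝ) (f := SS K.κ n h)
    (fun z _ => h2.differentiable (by norm_num) z) (fun z _ => h3 z) convex_univ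
    (mem_univ y) (mem_univ x)
  have m0 := K.m_pos hN
  rw [← mul_sub, abs_mul, abs_of_pos (inv_pos.2 m0), mul_assoc]
  refine mul_le_mul_of_nonneg_left ?_ (inv_pos.2 m0).le
  rw [add_mul]
  refine le_trans ?_ (add_le_add a1 a2)
  refine le_trans (le_of_eq ?_) (norm_add_le _ _)
  rw [Real.norm_eq_abs]; congr 1; ring

lemma rep_weak (hN : 1 ≤ N) (hw : WeakSol Ω w h) (hwl : LocallyIntegrable w) :
    WeakSol Ω (rep K w) h := by
  intro ψ hψ
  rw [← hw ψ hψ]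
  apply integral_congr_ae
  filter_upwards [rep_ae K hN hwl] with x hx
  rw [hx]

lemma rep_contDiff_two (hΩ : IsOpen Ω) (hw : WeakSol Ω w h) (hwl : LocallyIntegrable w)
    (hhl : LocallyIntegrable h) (hB : ∀ x, |h x| ≤ B) (hh : ContDiffOn ℝ 1 h Ω) :
    ContDiffOn ℝ 2 (rep K w) Ω := by
  intro x hx
  apply ContDiffAt.contDiffWithinAt
  obtain ⟨n, hn⟩ := exists_dyadic hΩ hx
  obtain ⟨χ, χ1, χ2, χ3, χ4⟩ : ∃ χ : RN N → ℝ, ContDiff ℝ 1 χ ∧ HasCompactSupport χ ∧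
      tsupport χ ⊆ Ω ∧ ∀ z ∈ Metric.closedBall x (2 * (1 / 2 : ℝ) ^ n), χ z = 1 := by
    obtain ⟨δ, hδ, hδ'⟩ := (isCompact_closedBall x (2 * (1 / 2 : ℝ) ^ n)).exists_cthickening_subset_open
      hΩ hn
    have p : 0 < 2 * (1 / 2 : ℝ) ^ n := by positivity
    let b : ContDiffBump x := ⟨2 * (1 / 2 : ℝ) ^ n, 2 * (1 / 2 : ℝ) ^ n + δ, p, by linarith⟩
    refine ⟨b, b.contDiff, b.hasCompactSupport, ?_, fun z hz => b.one_of_mem_closedBall hz⟩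
    rw [b.tsupport_eq]
    refine Subset.trans ?_ hδ'
    rw [cthickening_closedBall hδ.le p.le, add_comm]
  set H : RN N → ℝ := fun z => χ z * h z with hH
  have Hc : HasCompactSupport H := χ2.mul_right
  have Hd : ContDiff ℝ 1 H := by
    rw [contDiff_iff_contDiffAt]
    intro z
    by_cases hz : z ∈ tsupport χ
    · exact χ1.contDiffAt.mul (hh.contDiffAt (hΩ.mem_nhds (χ3 hz)))
    · have : H =ᶠ[𝓝 z] fun _ => 0 := by
        filter_upwards [(isClosed_tsupport χ).isOpen_compl.mem_nhds hz] with y hy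
        simp [hH, image_eq_zero_of_notMem_tsupport hy]
      exact contDiffAt_const.congr_of_eventuallyEq this
  have e : rep K w =ᶠ[𝓝 x] fun y => K.m⁻¹ * (cv (sc n K.η) w y + SS K.κ n H y) := by
    filter_upwards [Metric.ball_mem_nhds x (by positivity : 0 < (1 / 2 : ℝ) ^ n)] with y hy
    rw [rep_eq K hw hwl hhl hB (dyadic_ball_sub hn hy)]
    congr 2
    refine tsum_congr fun k => ?_
    congr 1
    rw [cv_apply, cv_apply]
    congr 1; ext t
    by_cases ht : (1 / 2 : ℝ) ^ (n + k) ≤ ‖t‖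
    · rw [sc_off _ K.κ_off ht]; simp
    · congr 1
      rw [hH]
      simp only
      rw [χ4, one_mul]
      have h1 : (1 / 2 : ℝ) ^ (n + k) ≤ (1 / 2) ^ n :=
        pow_le_pow_of_le_one (by norm_num) (by norm_num) (by omega)
      rw [Metric.mem_closedBall, dist_eq_norm]
      have h2 := Metric.mem_ball.1 hy
      rw [dist_eq_norm] at h2
      rw [show y - t - x = (y - x) - t by abel]
      have := norm_sub_le (y - x) t
      linarith
  refine ContDiffAt.congr_of_eventuallyEq ?_ e
  exact (contDiff_const.mul ((cv_eta_contDiff K n hwl).add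
    (SS_contDiff_two K.κ_diff K.κ_off n Hc Hd))).contDiffAt

lemma test_mul_continuous (hΩ : IsOpen Ω) {F ψ : RN N → ℝ} (hF : ContinuousOn F Ω)
    (hψ : Continuous ψ) (hs : tsupport ψ ⊆ Ω) : Continuous (fun x => ψ x * F x) := by
  rw [continuous_iff_continuousAt]
  intro z
  by_cases hz : z ∈ tsupport ψ
  · exact hψ.continuousAt.mul (hF.continuousAt (hΩ.mem_nhds (hs hz)))
  · have : (fun x => ψ x * F x) =ᶠ[𝓝 z] fun _ => 0 := by
      filter_upwards [(isClosed_tsupport ψ).isOpen_compl.mem_nhds hz] with y hy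
      simp [image_eq_zero_of_notMem_tsupport hy]
    exact continuousAt_const.congr this.symm

lemma classical_of_weak (hΩ : IsOpen Ω) {v : RN N → ℝ} (hv : ContDiffOn ℝ 2 v Ω)
    (hw : WeakSol Ω v h) (hh : ContinuousOn h Ω) : ∀ x ∈ Ω, -lapl v x = h x := by
  have lc : ContinuousOn (lapl v) Ω := fun x hx =>
    (lapl_continuousAt (hv.contDiffAt (hΩ.mem_nhds hx))).continuousWithinAt
  have fc : ContinuousOn (fun x => lapl v x + h x) Ω := lc.add hh
  have ae : ∀ᵐ x, x ∈ Ω → lapl v x + h x = 0 := by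
    refine hΩ.ae_eq_zero_of_integral_contDiff_smul_eq_zero
      (fc.locallyIntegrableOn hΩ.measurableSet) ?_
    intro ψ h1 h2 h3
    have ht : ψ ∈ TestFn Ω := ⟨contDiff_infty.1 h1 2, h2, h3⟩
    have g1 := green hΩ hv ht
    have g2 := hw ψ ht
    have i1 : Integrable (fun x => ψ x * lapl v x) :=
      (test_mul_continuous hΩ lc h1.continuous h3).integrable_of_hasCompactSupport h2.mul_right
    have i2 : Integrable (fun x => ψ x * h x) :=
      (test_mul_continuous hΩ hh h1.continuous h3).integrable_of_hasCompactSupport h2.mul_right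
    simp only [smul_eq_mul, mul_add]
    rw [integral_add i1 i2, ← g1, g2]
    simp [mul_comm]
  have := Measure.eqOn_open_of_ae_eq (μ := volume) (f := fun x => lapl v x + h x)
    (g := fun _ => 0) ((ae_restrict_iff' hΩ.measurableSet).2 ae) hΩ fc continuousOn_const
  intro x hx
  have := this hx
  simp only at this
  linarith

/-- strong minimum principle -/
lemma strong_min (hN : 1 ≤ N) (hΩ : IsOpen Ω) (hc : IsPreconnected Ω) (hw : WeakSol Ω w h)
    (hwl : LocallyIntegrable w) (hhl : LocallyIntegrable h) (hB : ∀ x, |h x| ≤ B)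
    (hwc : ContinuousOn w Ω) (h0 : ∀ x, 0 ≤ h x) {c : ℝ} (hwge : ∀ x ∈ Ω, c ≤ w x)
    {x0 : RN N} (hx0 : x0 ∈ Ω) (hx0c : w x0 = c) : ∀ x ∈ Ω, w x = c := by
  obtain ⟨K⟩ := exists_ker N
  have m0 := K.m_pos hN
  have loc : ∀ x ∈ Ω, w x = c → ∀ᶠ z in 𝓝 x, z ∈ Ω ∧ w z = c := by
    intro x hx hxc
    obtain ⟨n, hn⟩ := exists_dyadic hΩ hx
    filter_upwards [Metric.ball_mem_nhds x (by positivity : 0 < (1 / 2 : ℝ) ^ n)] with z hz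
    have hzΩ : z ∈ Ω := dyadic_ball_sub hn hz (Metric.mem_closedBall_self (by positivity))
    refine ⟨hzΩ, ?_⟩
    by_contra hne
    have hgt : c < w z := lt_of_le_of_ne (hwge z hzΩ) (Ne.symm hne)
    have hzx : 0 < ‖x - z‖ := by
      rw [norm_pos_iff, sub_ne_zero]
      rintro rfl
      exact hne hxc
    rw [Metric.mem_ball, dist_comm, dist_eq_norm] at hz
    have hle1 : ‖x - z‖ ≤ 1 := hz.le.trans (pow_le_one₀ (by norm_num) (by norm_num))
    obtain ⟨k, hk1, hk2⟩ : ∃ k : ℕ, (1 / 2 : ℝ) ^ (k + 1) ≤ ‖x - z‖ ∧ ‖x - z‖ < (1 / 2) ^ k := by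
      have hz1 : ‖x - z‖ < 1 := hz.trans_le (pow_le_one₀ (by norm_num) (by norm_num))
      have hex : ∃ k : ℕ, (1 / 2 : ℝ) ^ k ≤ ‖x - z‖ := by
        obtain ⟨k, hk⟩ := exists_pow_lt_of_lt_one hzx (by norm_num : (1 / 2 : ℝ) < 1)
        exact ⟨k, hk.le⟩
      classical
      have hs := Nat.find_spec hex
      have hm : ∀ j < Nat.find hex, _ := fun j hj => Nat.find_min hex hj
      rcases hf : Nat.find hex with _ | j
      · rw [hf] at hs; simp at hs; linarith
      · refine ⟨j, by rw [hf] at hs; exact hs, ?_⟩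
        have := hm j (by omega)
        linarith
    have hkn : n ≤ k := by
      by_contra hcon
      have : (1 / 2 : ℝ) ^ n ≤ (1 / 2) ^ (k + 1) :=
        pow_le_pow_of_le_one (by norm_num) (by norm_num) (by omega)
      linarith
    have hb : Metric.closedBall x ((1 / 2 : ℝ) ^ k) ⊆ Ω := by
      refine (Metric.closedBall_subset_closedBall ?_).trans hn
      have : (1 / 2 : ℝ) ^ k ≤ (1 / 2) ^ n :=
        pow_le_pow_of_le_one (by norm_num) (by norm_num) hkn
      have : (0:ℝ) < (1 / 2) ^ n := by positivity
      linarith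
    have e1 := rep_eq K hw hwl hhl hB hb
    rw [rep_of_continuousAt K hN hwl (hwc.continuousAt (hΩ.mem_nhds hx))] at e1
    have e2 : K.m * w x = cv (sc k K.η) w x + SS K.κ k h x := by
      rw [e1, mul_inv_cancel_left₀ m0.ne']
    have S0 : 0 ≤ SS K.κ k h x := by
      refine tsum_nonneg fun i => ?_
      refine smul_nonneg (by positivity) ?_
      rw [cv_apply]
      exact integral_nonneg fun t => smul_nonneg (sc_nonneg _ K.κ_nonneg _) (h0 _)
    have e3 := cv_sub_eq K hwl k x
    have ex : Integrable (fun z => sc k K.η (x - z) * (w z - w x)) := by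
      have := (sc_compact k K.η_off).convolutionExists_left (ContinuousLinearMap.lsmul ℝ ℝ)
        (sc_contDiff k K.η_diff).continuous hwl x
      have h1 := this.integrable_swap
      have h2 := ((sc_eta_int K k).comp_sub_left x).mul_const (w x)
      have := h1.sub h2
      refine this.congr (Eventually.of_forall fun z => ?_)
      simp [mul_sub]
    have nn : ∀ z, 0 ≤ sc k K.η (x - z) * (w z - w x) := by
      intro z
      by_cases hz : (1 / 2 : ℝ) ^ k ≤ ‖x - z‖
      · rw [sc_off _ K.η_off hz]; simp
      · refine mul_nonneg (sc_nonneg _ K.η_nonneg _) ?_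
        rw [hxc]
        have : z ∈ Ω := hb (by
          rw [Metric.mem_closedBall, dist_comm, dist_eq_norm]; exact (not_le.1 hz).le)
        linarith [hwge z this]
    have pos : 0 < ∫ z, sc k K.η (x - z) * (w z - w x) := by
      rw [integral_pos_iff_support_of_nonneg nn ex]
      refine Measure.measure_pos_of_mem_nhds volume (x := z) ?_
      have cz : ContinuousAt (fun z => sc k K.η (x - z) * (w z - w x)) z :=
        ((sc_contDiff k K.η_diff).continuous.comp (continuous_const.sub continuous_id)).continuousAt.mul
          ((hwc.continuousAt (hΩ.mem_nhds hzΩ)).sub continuousAt_const)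
      have p : 0 < sc k K.η (x - z) * (w z - w x) := by
        refine mul_pos ?_ (by linarith)
        have h2k : (2:ℝ) ^ k * (1 / 2) ^ k = 1 := by rw [← mul_pow]; norm_num
        refine mul_pos (by positivity) (K.η_pos _ ?_ ?_)
        · rw [norm_smul, Real.norm_of_nonneg (by positivity)]
          calc (1 / 2 : ℝ) = 2 ^ k * (1 / 2) ^ (k + 1) := by rw [pow_succ, ← mul_assoc, h2k]; ring
            _ ≤ _ := by gcongr
        · rw [norm_smul, Real.norm_of_nonneg (by positivity), ← h2k]
          gcongr
      filter_upwards [cz.eventually (lt_mem_nhds p)] with y hy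
      exact hy.ne'
    linarith
  have hopen : IsOpen {x | x ∈ Ω ∧ w x = c} := by
    rw [isOpen_iff_mem_nhds]
    rintro x ⟨hx, hxc⟩
    exact loc x hx hxc
  have := hc.subset_of_closure_inter_subset hopen ⟨x0, hx0, hx0, hx0c⟩ ?_
  · exact fun x hx => (this hx).2
  · rintro x ⟨hx1, hx2⟩
    refine ⟨hx2, ?_⟩
    have hcx := hwc.continuousAt (hΩ.mem_nhds hx2)
    obtain ⟨s, hs1, hs2⟩ := mem_closure_iff_seq_limit.1 hx1
    have := hcx.tendsto.comp hs2
    refine tendsto_nhds_unique this ?_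
    refine tendsto_const_nhds.congr fun n => ?_
    exact (hs1 n).2.symm

end Reg

section SolSec
variable {N : ℕ} {Ω : Set (RN N)} {h h' v v' : RN N → ℝ} {B : ℝ}

/-- continuous weak solutions of the Dirichlet problem, extended by zero -/
structure Sol (Ω : Set (RN N)) (v h : RN N → ℝ) : Prop where
  cont : ContinuousOn v (closure Ω)
  off : ∀ x ∉ Ω, v x = 0
  weak : WeakSol Ω v h

lemma Sol.bdd (hb : Bornology.IsBounded Ω) (hv : Sol Ω v h) : ∃ C, ∀ x, |v x| ≤ C := by
  obtain ⟨C, hC⟩ := hb.isCompact_closure.exists_bound_of_continuousOn hv.cont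
  refine ⟨max C 0, fun x => ?_⟩
  by_cases hx : x ∈ Ω
  · exact (hC x (subset_closure hx)).trans (le_max_left _ _)
  · rw [hv.off x hx]; simp

lemma Sol.locInt (hΩ : IsOpen Ω) (hb : Bornology.IsBounded Ω) (hv : Sol Ω v h) :
    LocallyIntegrable v := by
  obtain ⟨C, hC⟩ := hv.bdd hb
  refine locInt_of_bdd ?_ hC
  have e : v = Ω.indicator v := by
    ext x
    by_cases hx : x ∈ Ω
    · simp [hx]
    · simp [hx, hv.off x hx]
  rw [e, aestronglyMeasurable_indicator_iff hΩ.measurableSet]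
  exact (hv.cont.mono subset_closure).aestronglyMeasurable hΩ.measurableSet

lemma locInt_mul_test (hv : LocallyIntegrable v) {ψ : RN N → ℝ} (hψ : Continuous ψ)
    (hc : HasCompactSupport ψ) : Integrable (fun x => v x * ψ x) := by
  have := hv.integrable_smul_right_of_hasCompactSupport hψ hc
  simpa [smul_eq_mul] using this

lemma weak_comb (hv : LocallyIntegrable v) (hv' : LocallyIntegrable v')
    (hh : LocallyIntegrable h) (hh' : LocallyIntegrable h') (h1 : WeakSol Ω v h)
    (h2 : WeakSol Ω v' h') (a b : ℝ) :
    WeakSol Ω (fun x => a * v x + b * v' x) (fun x => a * h x + b * h' x) := by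
  intro ψ hψ
  have e1 := h1 ψ hψ
  have e2 := h2 ψ hψ
  have c1 := lapl_continuous hψ.1
  have c2 := lapl_compact hψ.2.1
  have c3 := hψ.1.continuous
  simp only [add_mul, mul_assoc]
  rw [integral_add ((locInt_mul_test hv c1 c2).const_mul a) ((locInt_mul_test hv' c1 c2).const_mul b),
    integral_add ((locInt_mul_test hh c3 hψ.2.1).const_mul a)
      ((locInt_mul_test hh' c3 hψ.2.1).const_mul b)]
  simp only [integral_const_mul]
  rw [e1, e2]
  ring

lemma Sol.comb (hΩ : IsOpen Ω) (hb : Bornology.IsBounded Ω)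
    (hh : LocallyIntegrable h) (hh' : LocallyIntegrable h') (h1 : Sol Ω v h)
    (h2 : Sol Ω v' h') (a b : ℝ) :
    Sol Ω (fun x => a * v x + b * v' x) (fun x => a * h x + b * h' x) where
  cont := (continuousOn_const.mul h1.cont).add (continuousOn_const.mul h2.cont)
  off := fun x hx => by rw [h1.off x hx, h2.off x hx]; simp
  weak := weak_comb (h1.locInt hΩ hb) (h2.locInt hΩ hb) hh hh' h1.weak h2.weak a b

lemma frontier_nonempty_of (hN : 1 ≤ N) (hne : Ω.Nonempty) (hb : Bornology.IsBounded Ω) :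
    (frontier Ω).Nonempty := by
  have : Nonempty (Fin N) := ⟨⟨0, hN⟩⟩
  by_contra hcon
  rw [not_nonempty_iff_eq_empty, frontier_eq_empty_iff] at hcon
  rcases hcon with hcon | hcon
  · exact hne.ne_empty hcon
  · rw [hcon] at hb
    exact NormedSpace.unbounded_univ ℝ (RN N) hb

lemma Sol.nonneg (hN : 1 ≤ N) (hΩ : IsOpen Ω) (hc : IsConnected Ω) (hb : Bornology.IsBounded Ω)
    (hv : Sol Ω v h) (hhl : LocallyIntegrable h) (hB : ∀ x, |h x| ≤ B) (h0 : ∀ x, 0 ≤ h x) :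
    ∀ x, 0 ≤ v x := by
  obtain ⟨x0, hx0, hmin⟩ := hb.isCompact_closure.exists_isMinOn (hc.nonempty.closure) hv.cont
  have hm : ∀ x ∈ closure Ω, v x0 ≤ v x := fun x hx => hmin hx
  have key : 0 ≤ v x0 := by
    by_cases hx : x0 ∈ Ω
    · have := strong_min hN hΩ hc.isPreconnected hv.weak (hv.locInt hΩ hb) hhl hB
        (hv.cont.mono subset_closure) h0 (c := v x0) (fun x hx => hm x (subset_closure hx)) hx rfl
      obtain ⟨y, hy⟩ := frontier_nonempty_of hN hc.nonempty hb
      have hyΩ : y ∉ Ω := by rw [hΩ.frontier_eq] at hy; exact hy.2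
      have hycl : y ∈ closure Ω := frontier_subset_closure hy
      have eq : EqOn v (fun _ => v x0) (closure Ω) :=
        EqOn.of_subset_closure (fun x hx => this x hx) hv.cont continuousOn_const
          subset_closure subset_rfl
      have := eq hycl
      rw [hv.off y hyΩ] at this
      exact this.le
    · rw [hv.off x0 hx]
  intro x
  by_cases hx : x ∈ Ω
  · exact key.trans (hm x (subset_closure hx))
  · rw [hv.off x hx]

lemma Sol.unique (hN : 1 ≤ N) (hΩ : IsOpen Ω) (hc : IsConnected Ω) (hb : Bornology.IsBounded Ω)
    (hv : Sol Ω v h) (hv' : Sol Ω v' h) (hhl : LocallyIntegrable h) : v = v' := by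
  have h1 := hv.comb hΩ hb hhl hhl hv' 1 (-1)
  have h2 := hv.comb hΩ hb hhl hhl hv' (-1) 1
  have e : ∀ x, (1 : ℝ) * h x + -1 * h x = 0 := fun x => by ring
  have e' : ∀ x, (-1 : ℝ) * h x + 1 * h x = 0 := fun x => by ring
  simp only [e] at h1
  simp only [e'] at h2
  have lz : LocallyIntegrable (fun _ : RN N => (0:ℝ)) := continuous_const.locallyIntegrable
  have n1 := h1.nonneg hN hΩ hc hb lz (B := 0) (by simp) (by simp)
  have n2 := h2.nonneg hN hΩ hc hb lz (B := 0) (by simp) (by simp)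
  ext x
  have := n1 x
  have := n2 x
  linarith

theorem exists_sol (hN : 1 ≤ N) (hΩ : IsOpen Ω) (hb : Bornology.IsBounded Ω)
    {ξ : RN N → ℝ} (hξ : IsTorsionFn Ω ξ) :
    ∃ C : ℕ → ℝ, (∀ n, 0 ≤ C n) ∧ ∀ (M : ℝ) (h : RN N → ℝ), AEStronglyMeasurable h →
      (∀ x, |h x| ≤ M) → ∃ v, Sol Ω v h ∧ (∀ x ∈ closure Ω, |v x| ≤ M * ξ x) ∧
        ContDiffOn ℝ 1 v Ω ∧ (ContDiffOn ℝ 1 h Ω → ContDiffOn ℝ 2 v Ω) ∧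
        ∀ n x0, Metric.closedBall x0 (2 * (1 / 2 : ℝ) ^ n) ⊆ Ω →
          ∀ x ∈ Metric.ball x0 ((1 / 2 : ℝ) ^ n), ∀ y ∈ Metric.ball x0 ((1 / 2 : ℝ) ^ n),
            |v x - v y| ≤ C n * M * ‖x - y‖ := by
  obtain ⟨K⟩ := exists_ker N
  have m0 := K.m_pos hN
  obtain ⟨hξc, hξ2, hξ0, hξl, hξb⟩ := id hξ
  obtain ⟨B, hB⟩ := hb.isCompact_closure.exists_bound_of_continuousOn hξc
  set B1 := max B 0
  have hB1 : ∀ x, Ω.indicator ξ x ≤ B1 := by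
    intro x
    by_cases hx : x ∈ Ω
    · rw [indicator_of_mem hx]
      exact (le_abs_self _).trans ((hB x (subset_closure hx)).trans (le_max_left _ _))
    · rw [indicator_of_notMem hx]; exact le_max_right _ _
  have ind0 : ∀ x, 0 ≤ Ω.indicator ξ x := fun x => indicator_nonneg hξ0 x
  have B10 : 0 ≤ B1 := le_max_right _ _
  have I1 : 0 ≤ ∫ t, ‖fderiv ℝ K.η t‖ := integral_nonneg fun _ => norm_nonneg _
  have I2 : 0 ≤ ∫ t, ‖fderiv ℝ K.κ t‖ := integral_nonneg fun _ => norm_nonneg _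
  refine ⟨fun n => K.m⁻¹ * ((2 ^ n * ∫ t, ‖fderiv ℝ K.η t‖) * B1 +
      2 * (∫ t, ‖fderiv ℝ K.κ t‖)), fun n => by positivity, ?_⟩
  intro M h hm hM
  have M0 : 0 ≤ M := (abs_nonneg _).trans (hM 0)
  obtain ⟨w0, wi0, wb0, ww0⟩ := exists_weak hΩ hb hξ M0 hm hM
  obtain ⟨w, wi, wb, ww⟩ : ∃ w : RN N → ℝ, Integrable w ∧
      (∀ x, |w x| ≤ M * Ω.indicator ξ x) ∧ WeakSol Ω w h := by
    classical
    have ae : (fun x => if |w0 x| ≤ M * Ω.indicator ξ x then w0 x else 0) =ᵐ[volume] w0 := by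
      filter_upwards [wb0] with x hx
      simp [hx]
    refine ⟨_, wi0.congr ae.symm, fun x => ?_, ?_⟩
    · clear ae
      split_ifs with hx
      · exact hx
      · simpa using mul_nonneg M0 (ind0 x)
    · intro ψ hψ
      rw [← ww0 ψ hψ]
      apply integral_congr_ae
      filter_upwards [ae] with x hx
      rw [hx]
  have wB : ∀ x, |w x| ≤ M * B1 := fun x => (wb x).trans (mul_le_mul_of_nonneg_left (hB1 x) M0)
  have hwl := wi.locallyIntegrable
  have hhl := locInt_of_bdd hm hM
  have c1 := rep_contDiff_one K hΩ ww hwl hhl hM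
  have eqΩ : EqOn (Ω.indicator (rep K w)) (rep K w) Ω := fun x hx => indicator_of_mem hx _
  have bd : ∀ x ∈ Ω, |rep K w x| ≤ M * ξ x := by
    have := Measure.eqOn_open_of_ae_eq (μ := volume) (U := Ω)
      (f := fun x => max (|rep K w x| - M * ξ x) 0)
      (g := fun _ => 0) (by
        rw [EventuallyEq, ae_restrict_iff' hΩ.measurableSet]
        filter_upwards [rep_ae K hN hwl] with x hx hxΩ
        rw [hx]
        have := wb x
        rw [indicator_of_mem hxΩ] at this
        exact max_eq_right (by linarith)) hΩ
      (((c1.continuousOn.abs).sub (continuousOn_const.mul hξ2.continuousOn)).sup continuousOn_const)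
      continuousOn_const
    intro x hx
    have := this hx
    simp only at this
    have := le_max_left (|rep K w x| - M * ξ x) 0
    linarith
  have bdc : ∀ x ∈ closure Ω, |Ω.indicator (rep K w) x| ≤ M * ξ x := by
    intro x hx
    by_cases hxΩ : x ∈ Ω
    · rw [indicator_of_mem hxΩ]; exact bd x hxΩ
    · rw [indicator_of_notMem hxΩ, hξb x (by rw [hΩ.frontier_eq]; exact ⟨hx, hxΩ⟩)]; simp
  refine ⟨Ω.indicator (rep K w), ⟨?_, fun x hx => indicator_of_notMem hx _, ?_⟩, bdc,
    c1.congr eqΩ, fun hd => (rep_contDiff_two K hΩ ww hwl hhl hM hd).congr eqΩ, ?_⟩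
  · intro x hx
    by_cases hxΩ : x ∈ Ω
    · apply ContinuousAt.continuousWithinAt
      refine ContinuousAt.congr (f := rep K w) (c1.continuousOn.continuousAt (hΩ.mem_nhds hxΩ)) ?_
      filter_upwards [hΩ.mem_nhds hxΩ] with y hy
      exact (eqΩ hy).symm
    · have fx : ξ x = 0 := hξb x (by rw [hΩ.frontier_eq]; exact ⟨hx, hxΩ⟩)
      rw [ContinuousWithinAt, indicator_of_notMem hxΩ]
      rw [tendsto_zero_iff_abs_tendsto_zero]
      have t : Tendsto (fun y => M * ξ y) (𝓝[closure Ω] x) (𝓝 0) := by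
        have := (hξc x hx).tendsto.const_mul M
        rwa [fx, mul_zero] at this
      refine tendsto_of_tendsto_of_tendsto_of_le_of_le' tendsto_const_nhds t
        (Eventually.of_forall fun y => abs_nonneg _) ?_
      filter_upwards [self_mem_nhdsWithin] with y hy
      exact bdc y hy
  · intro ψ hψ
    rw [← rep_weak K hN ww hwl ψ hψ]
    congr 1; ext x
    by_cases hx : x ∈ Ω
    · rw [eqΩ hx]
    · rw [lapl_zero_off (fun hh => hx (hψ.2.2 hh))]; simp
  · intro n x0 hn x hx y hy
    have sub : Metric.ball x0 ((1 / 2 : ℝ) ^ n) ⊆ Ω := fun z hz =>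
      dyadic_ball_sub hn hz (Metric.mem_closedBall_self (by positivity))
    rw [eqΩ (sub hx), eqΩ (sub hy)]
    refine (rep_lip K hN hn ww hwl hhl hM wB hx hy).trans (le_of_eq ?_)
    ring

end SolSec

section Abs
set_option linter.unusedSectionVars false

/-- Abstract data for the fixed point argument. -/
structure AbsData (X : Type*) [TopologicalSpace X] [CompactSpace X] where
  G : C(X, ℝ) →ₗ[ℝ] C(X, ℝ)
  Gpos : ∀ h : C(X, ℝ), (∀ x, 0 ≤ h x) → ∀ x, 0 ≤ G h x
  g : ℝ
  g0 : 0 ≤ g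
  Gb : ∀ h, ‖G h‖ ≤ g * ‖h‖
  Gc : ∀ M : ℝ, ∃ S : Set C(X, ℝ), IsCompact S ∧ ∀ h, ‖h‖ ≤ M → G h ∈ S
  φ : C(X, ℝ)
  φ0 : ∀ x, 0 ≤ φ x
  Nm : C(X, ℝ) → ℝ
  Nm0 : ∀ u, 0 ≤ Nm u
  C : ℝ
  C0 : 0 ≤ C
  NmLip : ∀ u v, |Nm u - Nm v| ≤ C * ‖u - v‖
  NmHom : ∀ (c : ℝ) u, 0 ≤ c → Nm (c • u) = c * Nm u
  NmMono : ∀ u v : C(X, ℝ), (∀ x, 0 ≤ u x) → (∀ x, u x ≤ v x) → Nm u ≤ Nm v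
  NmZero : ∀ u, Nm u = 0 → u = 0

variable {X : Type*} [TopologicalSpace X] [CompactSpace X] (D : AbsData X)

/-- pointwise power -/
def pw (p : ℝ) (hp : 0 < p) (u : C(X, ℝ)) : C(X, ℝ) :=
  ⟨fun x => u x ^ p, u.continuous.rpow_const fun _ => Or.inr hp.le⟩

lemma pw_nonneg {p : ℝ} (hp : 0 < p) {u : C(X, ℝ)} (hu : ∀ x, 0 ≤ u x) (x : X) :
    0 ≤ pw p hp u x := rpow_nonneg (hu x) _

lemma pw_norm_le {p : ℝ} (hp : 0 < p) {u : C(X, ℝ)} (hu : ∀ x, 0 ≤ u x) {r : ℝ}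
    (hr : ‖u‖ ≤ r) : ‖pw p hp u‖ ≤ r ^ p := by
  have r0 : 0 ≤ r := (norm_nonneg _).trans hr
  rw [ContinuousMap.norm_le _ (rpow_nonneg r0 _)]
  intro x
  rw [Real.norm_of_nonneg (pw_nonneg hp hu x)]
  refine rpow_le_rpow (hu x) ?_ hp.le
  exact (le_abs_self _).trans ((u.norm_coe_le_norm x).trans hr)

namespace AbsData

lemma Gcont : Continuous D.G := AddMonoidHomClass.continuous_of_bound D.G D.g D.Gb

lemma Gmono {h h' : C(X, ℝ)} (hh : ∀ x, h x ≤ h' x) (x : X) : D.G h x ≤ D.G h' x := by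
  have := D.Gpos (h' - h) (fun x => by simpa using hh x) x
  rw [map_sub] at this
  simpa using this

lemma Nmcont : Continuous D.Nm := by
  have : LipschitzWith (Real.toNNReal D.C) D.Nm := by
    apply LipschitzWith.of_dist_le_mul
    intro u v
    rw [Real.dist_eq, dist_eq_norm, Real.coe_toNNReal _ D.C0]
    exact D.NmLip u v
  exact this.continuous

lemma Nm_le (u : C(X, ℝ)) : D.Nm u ≤ D.C * ‖u‖ := by
  have h1 := D.NmLip u 0
  have h2 := D.NmHom 0 0 le_rfl
  rw [zero_smul, zero_mul] at h2
  rw [h2, sub_zero, sub_zero] at h1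
  exact (le_abs_self _).trans h1

lemma rpow_sub_le {p r : ℝ} (hp : 1 < p) {s t : ℝ} (hs : s ∈ Icc 0 r) (ht : t ∈ Icc 0 r) :
    |s ^ p - t ^ p| ≤ p * r ^ (p - 1) * |s - t| := by
  have := Convex.norm_image_sub_le_of_norm_hasDerivWithin_le (𝕜 := ℝ) (f := fun x : ℝ => x ^ p)
    (f' := fun x => p * x ^ (p - 1)) (s := Icc 0 r) (C := p * r ^ (p - 1)) (x := t) (y := s)
    (fun x _ => (Real.hasDerivAt_rpow_const (Or.inr hp.le)).hasDerivWithinAt)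
    (fun x hx => by
      rw [Real.norm_of_nonneg (mul_nonneg (by linarith) (rpow_nonneg hx.1 _))]
      exact mul_le_mul_of_nonneg_left (rpow_le_rpow hx.1 hx.2 (by linarith)) (by linarith))
    (convex_Icc _ _) ht hs
  exact this

theorem fix_gt {p d : ℝ} (hp : 1 < p) (hd : 0 < d) : ∃ lf : ℝ, 0 < lf ∧ ∀ lam, 0 < lam → lam < lf →
    ∃ u : C(X, ℝ), (∀ x, 0 ≤ u x) ∧
      (1 + d * D.Nm u ^ 2) • u = D.G (pw p (by linarith) u) + lam • D.φ := by
  have p0 : 0 < p := by linarith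
  obtain ⟨r, r0, hr1, hr2⟩ : ∃ r : ℝ, 0 < r ∧ D.g * r ^ (p - 1) < 1 / 2 ∧
      D.g * (p * r ^ (p - 1)) + 2 * d * D.C ^ 2 * r ^ 2 < 1 / 2 := by
    have t1 : Tendsto (fun r : ℝ => r ^ (p - 1)) (𝓝[>] 0) (𝓝 0) := by
      have := (Real.continuousAt_rpow_const 0 (p - 1) (Or.inr (by linarith))).tendsto
      rw [Real.zero_rpow (by linarith)] at this
      exact this.mono_left nhdsWithin_le_nhds
    have t2 : Tendsto (fun r : ℝ => r) (𝓝[>] 0) (𝓝 0) := tendsto_id.mono_left nhdsWithin_le_nhds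
    have t3 := t1.const_mul D.g
    have t4 := ((t1.const_mul p).const_mul D.g).add ((t2.pow 2).const_mul (2 * d * D.C ^ 2))
    simp only [mul_zero, ne_eq, OfNat.ofNat_ne_zero, not_false_eq_true, zero_pow, add_zero] at t3 t4
    have e1 := t3.eventually (gt_mem_nhds (by norm_num : (0:ℝ) < 1 / 2))
    have e2 := t4.eventually (gt_mem_nhds (by norm_num : (0:ℝ) < 1 / 2))
    obtain ⟨r, ⟨h1, h2⟩, h3⟩ := ((e1.and e2).and self_mem_nhdsWithin).exists
    exact ⟨r, h3, h1, h2⟩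
  refine ⟨r / (2 * (‖D.φ‖ + 1)), by positivity, fun lam l0 l1 => ?_⟩
  have hl : lam * ‖D.φ‖ ≤ r / 2 := by
    rw [lt_div_iff₀ (by positivity)] at l1
    nlinarith [norm_nonneg D.φ]
  set A : C(X, ℝ) → ℝ := fun u => 1 + d * D.Nm u ^ 2 with hA
  have A1 : ∀ u, 1 ≤ A u := fun u => by simp only [hA]; have := D.Nm0 u; nlinarith [sq_nonneg (D.Nm u)]
  set Rh : C(X, ℝ) → C(X, ℝ) := fun u => D.G (pw p p0 u) + lam • D.φ with hRh
  set T : C(X, ℝ) → C(X, ℝ) := fun u => (A u)⁻¹ • Rh u with hT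
  set s : Set C(X, ℝ) := {u | (∀ x, 0 ≤ u x) ∧ ‖u‖ ≤ r} with hs
  have sc : IsClosed s := by
    have h1 : IsClosed {u : C(X, ℝ) | ∀ x, 0 ≤ u x} := by
      rw [ show {u : C(X, ℝ) | ∀ x, 0 ≤ u x} = ⋂ x, {u : C(X, ℝ) | 0 ≤ u x} by ext; simp]
      exact isClosed_iInter fun x => isClosed_le continuous_const
        (continuous_eval_const x)
    exact h1.inter (isClosed_le continuous_norm continuous_const)
  have Rb : ∀ u ∈ s, ‖Rh u‖ ≤ r := by
    intro u hu
    have h1 := D.Gb (pw p p0 u)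
    have h2 := pw_norm_le p0 hu.1 hu.2
    have h3 : r ^ p = r ^ (p - 1) * r := by
      rw [← rpow_add_one r0.ne']; ring_nf
    have h4 : ‖Rh u‖ ≤ ‖D.G (pw p p0 u)‖ + ‖lam • D.φ‖ := norm_add_le _ _
    rw [norm_smul, Real.norm_of_nonneg l0.le] at h4
    have h5 : D.g * ‖pw p p0 u‖ ≤ D.g * r ^ p := mul_le_mul_of_nonneg_left h2 D.g0
    rw [h3] at h5
    nlinarith
  have Tm : MapsTo T s s := by
    intro u hu
    refine ⟨fun x => ?_, ?_⟩
    · simp only [hT, hRh, ContinuousMap.smul_apply, ContinuousMap.add_apply, smul_eq_mul]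
      refine mul_nonneg (inv_nonneg.2 (by linarith [A1 u])) (add_nonneg
        (D.Gpos _ (pw_nonneg p0 hu.1) x) (mul_nonneg l0.le (D.φ0 x)))
    · simp only [hT]
      rw [norm_smul, Real.norm_of_nonneg (inv_nonneg.2 (by linarith [A1 u]))]
      exact (mul_le_of_le_one_left (norm_nonneg _) (inv_le_one_of_one_le₀ (A1 u))).trans (Rb u hu)
  have Tl : ∀ u ∈ s, ∀ v ∈ s, ‖T u - T v‖ ≤ 1 / 2 * ‖u - v‖ := by
    intro u hu v hv
    have e : T u - T v = (A u)⁻¹ • (D.G (pw p p0 u - pw p p0 v)) + ((A u)⁻¹ - (A v)⁻¹) • Rh v := by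
      simp only [hT, hRh, map_sub]
      module
    have n1 : ‖pw p p0 u - pw p p0 v‖ ≤ p * r ^ (p - 1) * ‖u - v‖ := by
      rw [ContinuousMap.norm_le _ (by positivity)]
      intro x
      have hi : ∀ u ∈ s, u x ∈ Icc 0 r := fun u hu =>
        ⟨hu.1 x, (le_abs_self _).trans ((u.norm_coe_le_norm x).trans hu.2)⟩
      refine (rpow_sub_le hp (hi u hu) (hi v hv)).trans ?_
      refine mul_le_mul_of_nonneg_left ?_ (by positivity)
      exact (u - v).norm_coe_le_norm x
    have n2 : |(A u)⁻¹ - (A v)⁻¹| ≤ 2 * d * D.C ^ 2 * r * ‖u - v‖ := by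
      have hAu := A1 u
      have hAv := A1 v
      rw [inv_sub_inv (by linarith) (by linarith), abs_div]
      have h1 : 1 ≤ |A u * A v| := by
        rw [abs_of_pos (by positivity)]; nlinarith
      refine (div_le_self (abs_nonneg _) h1).trans ?_
      have h2 : A v - A u = d * (D.Nm v + D.Nm u) * (D.Nm v - D.Nm u) := by simp only [hA]; ring
      have b1 : D.Nm u ≤ D.C * r := (D.Nm_le u).trans (mul_le_mul_of_nonneg_left hu.2 D.C0)
      have b2 : D.Nm v ≤ D.C * r := (D.Nm_le v).trans (mul_le_mul_of_nonneg_left hv.2 D.C0)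
      have b3 := D.NmLip v u
      rw [norm_sub_rev] at b3
      have b4 := D.Nm0 u
      have b5 := D.Nm0 v
      rw [h2, abs_mul, abs_of_nonneg (by positivity)]
      calc d * (D.Nm v + D.Nm u) * |D.Nm v - D.Nm u| ≤ d * (D.C * r + D.C * r) * (D.C * ‖u - v‖) := by
            have := D.C0
            gcongr
        _ = _ := by ring
    rw [e]
    refine (norm_add_le _ _).trans ?_
    rw [norm_smul, norm_smul, Real.norm_of_nonneg (inv_nonneg.2 (by linarith [A1 u])),
      Real.norm_eq_abs]
    have h1 : (A u)⁻¹ * ‖D.G (pw p p0 u - pw p p0 v)‖ ≤ D.g * (p * r ^ (p - 1) * ‖u - v‖) :=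
      (mul_le_of_le_one_left (norm_nonneg _) (inv_le_one_of_one_le₀ (A1 u))).trans
        ((D.Gb _).trans (mul_le_mul_of_nonneg_left n1 D.g0))
    have h2 : |(A u)⁻¹ - (A v)⁻¹| * ‖Rh v‖ ≤ 2 * d * D.C ^ 2 * r * ‖u - v‖ * r :=
      mul_le_mul n2 (Rb v hv) (norm_nonneg _) (by positivity)
    nlinarith [norm_nonneg (u - v)]
  have hcw : ContractingWith (1 / 2 : ℝ≥0) (Tm.restrict T s s) := by
    refine ⟨by rw [← NNReal.coe_lt_coe]; norm_num, LipschitzWith.of_dist_le_mul ?_⟩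
    rintro ⟨u, hu⟩ ⟨v, hv⟩
    have := Tl u hu v hv
    rw [Subtype.dist_eq, Subtype.dist_eq, dist_eq_norm, dist_eq_norm]
    simpa using this
  obtain ⟨u, hu, hfix, -⟩ := ContractingWith.exists_fixedPoint' sc.isComplete Tm hcw
    (x := 0) ⟨fun x => le_rfl, by simpa using r0.le⟩ (edist_ne_top _ _)
  refine ⟨u, hu.1, ?_⟩
  have h1 : T u = u := hfix
  have h2 : A u • T u = Rh u := by
    simp only [hT]
    rw [smul_smul, mul_inv_cancel₀ (by linarith [A1 u]), one_smul]
  rw [h1] at h2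
  exact h2

end AbsData
end Abs

section Abs2
set_option linter.unusedSectionVars false
variable {X : Type*} [TopologicalSpace X] [CompactSpace X] (D : AbsData X)

lemma pw_cont {p : ℝ} (hp : 0 < p) : Continuous (pw p hp : C(X, ℝ) → C(X, ℝ)) := by
  have h : Continuous fun t : ℝ => t ^ p := Real.continuous_rpow_const hp.le
  exact ContinuousMap.continuous_postcomp (⟨_, h⟩ : C(ℝ, ℝ))

lemma pw_mono {p : ℝ} (hp : 0 < p) {u v : C(X, ℝ)} (hu : ∀ x, 0 ≤ u x) (h : ∀ x, u x ≤ v x)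
    (x : X) : pw p hp u x ≤ pw p hp v x := rpow_le_rpow (hu x) (h x) hp.le

lemma pw_smul {p : ℝ} (hp : 0 < p) {u : C(X, ℝ)} (hu : ∀ x, 0 ≤ u x) {c : ℝ} (hc : 0 ≤ c) :
    pw p hp (c • u) = c ^ p • pw p hp u := by
  ext x
  exact mul_rpow hc (hu x)

lemma mono_conv (U : ℕ → C(X, ℝ)) (hm : Monotone U) {S : Set C(X, ℝ)} (hS : IsCompact S)
    (hU : ∀ n, U n ∈ S) : ∃ L, Tendsto U atTop (𝓝 L) := by
  obtain ⟨L, -, ψ, hψ, hL⟩ := hS.tendsto_subseq hU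
  have hle : ∀ n x, U n x ≤ L x := by
    intro n x
    have h1 : Tendsto (fun m => U (ψ m) x) atTop (𝓝 (L x)) :=
      ((continuous_eval_const x).tendsto L).comp hL
    refine ge_of_tendsto h1 ?_
    filter_upwards [eventually_ge_atTop n] with m hm'
    exact hm (hm'.trans (hψ.id_le m)) x
  refine ⟨L, Metric.tendsto_atTop.2 fun ε he => ?_⟩
  obtain ⟨m, hm1⟩ := Metric.tendsto_atTop.1 hL ε he
  refine ⟨ψ m, fun n hn => lt_of_le_of_lt ?_ (hm1 m le_rfl)⟩
  rw [dist_eq_norm, dist_eq_norm, ContinuousMap.norm_le _ (norm_nonneg _)]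
  intro x
  refine le_trans ?_ ((U (ψ m) - L).norm_coe_le_norm x)
  simp only [ContinuousMap.sub_apply, Real.norm_eq_abs]
  have h1 := hle n x
  have h2 : U (ψ m) x ≤ U n x := hm hn x
  rw [abs_of_nonpos (by linarith), abs_of_nonpos (by linarith)]
  linarith

namespace AbsData

/-- The monotone iteration. -/
def it (p : ℝ) (hp : 0 < p) (lam a : ℝ) : ℕ → C(X, ℝ)
  | 0 => 0
  | n + 1 => a⁻¹ • (D.G (pw p hp (it p hp lam a n)) + lam • D.φ)

variable {p lam : ℝ} (hp : 0 < p)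

lemma it_nonneg (hl : 0 < lam) {a : ℝ} (ha : 0 < a) (n : ℕ) : ∀ x, 0 ≤ D.it p hp lam a n x := by
  induction n with
  | zero => intro x; simp [it]
  | succ n ih =>
    intro x
    simp only [it, ContinuousMap.smul_apply, ContinuousMap.add_apply, smul_eq_mul]
    exact mul_nonneg (inv_nonneg.2 ha.le) (add_nonneg
        (D.Gpos _ (pw_nonneg hp ih) x) (mul_nonneg hl.le (D.φ0 x)))

lemma it_mono (hl : 0 < lam) {a : ℝ} (ha : 0 < a) : Monotone (D.it p hp lam a) := by
  refine monotone_nat_of_le_succ fun n => ?_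
  induction n with
  | zero => exact fun x => D.it_nonneg hp hl ha 1 x
  | succ n ih =>
    intro x
    rw [it, it]
    change a⁻¹ * (D.G _ x + lam * D.φ x) ≤ a⁻¹ * (D.G _ x + lam * D.φ x)
    have := D.Gmono (pw_mono hp (D.it_nonneg hp hl ha n) ih) x
    have := inv_nonneg.2 ha.le
    gcongr

lemma it_anti (hl : 0 < lam) {a b : ℝ} (ha : 0 < a) (hab : a ≤ b) (n : ℕ) :
    ∀ x, D.it p hp lam b n x ≤ D.it p hp lam a n x := by
  have hb : 0 < b := ha.trans_le hab
  induction n with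
  | zero => intro x; simp [it]
  | succ n ih =>
    intro x
    rw [it, it]
    simp only [ContinuousMap.smul_apply, ContinuousMap.add_apply, smul_eq_mul]
    have h1 := D.Gmono (pw_mono hp (D.it_nonneg hp hl hb n) ih) x
    have h2 := D.Gpos _ (pw_nonneg hp (D.it_nonneg hp hl ha n)) x
    have h3 := D.φ0 x
    have h4 := D.Gpos _ (pw_nonneg hp (D.it_nonneg hp hl hb n)) x
    have := inv_nonneg.2 ha.le
    have := inv_nonneg.2 hb.le
    have : b⁻¹ ≤ a⁻¹ := inv_anti₀ ha hab
    have h5 : 0 ≤ lam * D.φ x := mul_nonneg hl.le h3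
    exact mul_le_mul this (by linarith) (by linarith) (by linarith)

lemma it_scale (hl : 0 < lam) (hp1 : p < 1) {a b : ℝ} (ha : 0 < a) (hab : a ≤ b) (n : ℕ) :
    ∀ x, (a / b) ^ (1 / (1 - p)) * D.it p hp lam a n x ≤ D.it p hp lam b n x := by
  have hb : 0 < b := ha.trans_le hab
  have t0 : 0 < a / b := div_pos ha hb
  have t1 : a / b ≤ 1 := (div_le_one hb).2 hab
  set k := 1 / (1 - p) with hk
  have k0 : 0 < k := one_div_pos.2 (by linarith)
  have hkp : k = k * p + 1 := by
    have : 1 - p ≠ 0 := by linarith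
    rw [hk]; field_simp; ring
  set t := a / b with ht
  have tk0 : 0 < t ^ k := rpow_pos_of_pos t0 _
  induction n with
  | zero => intro x; simp [it]
  | succ n ih =>
    intro x
    have hna := D.it_nonneg hp hl ha n
    have h1 : t ^ (k * p) * D.G (pw p hp (D.it p hp lam a n)) x
        ≤ D.G (pw p hp (D.it p hp lam b n)) x := by
      have := D.Gmono (pw_mono hp (u := t ^ k • D.it p hp lam a n) (v := D.it p hp lam b n)
        (fun x => mul_nonneg tk0.le (hna x)) (fun x => ih x)) x
      rw [pw_smul hp hna tk0.le, map_smul, ← rpow_mul t0.le] at this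
      exact this
    have h2 : t ^ (k * p) ≤ 1 := rpow_le_one t0.le t1 (by positivity)
    have h3 := D.φ0 x
    have h4 : t ^ k = t ^ (k * p) * t := by
      conv_lhs => rw [hkp]
      rw [rpow_add_one t0.ne']
    rw [it, it]
    simp only [ContinuousMap.smul_apply, ContinuousMap.add_apply, smul_eq_mul]
    have h5 : t * a⁻¹ = b⁻¹ := by rw [ht]; field_simp
    calc t ^ k * (a⁻¹ * (D.G (pw p hp (D.it p hp lam a n)) x + lam * D.φ x))
        = b⁻¹ * (t ^ (k * p) * D.G (pw p hp (D.it p hp lam a n)) x + t ^ (k * p) * (lam * D.φ x)) := by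
          rw [h4, ← h5]; ring
      _ ≤ b⁻¹ * (D.G (pw p hp (D.it p hp lam b n)) x + lam * D.φ x) := by
          refine mul_le_mul_of_nonneg_left (add_le_add h1 ?_) (inv_nonneg.2 hb.le)
          exact mul_le_of_le_one_left (by positivity) h2

lemma it_norm (hl : 0 < lam) {R : ℝ} (hR0 : 0 ≤ R) (hR : D.g * R ^ p + lam * ‖D.φ‖ ≤ R) {a : ℝ} (ha : 1 ≤ a) (n : ℕ) :
    ‖D.it p hp lam a n‖ ≤ R := by
  induction n with
  | zero => simpa [it] using hR0
  | succ n ih =>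
    rw [it, norm_smul, Real.norm_of_nonneg (inv_nonneg.2 (by linarith))]
    refine (mul_le_of_le_one_left (norm_nonneg _) (inv_le_one_of_one_le₀ ha)).trans ?_
    refine (norm_add_le _ _).trans (le_trans ?_ hR)
    rw [norm_smul, Real.norm_of_nonneg hl.le]
    have h1 := pw_norm_le hp (D.it_nonneg hp hl (by linarith : 0 < a) n) ih
    exact add_le_add ((D.Gb _).trans (mul_le_mul_of_nonneg_left h1 D.g0)) le_rfl

lemma exists_R (hl : 0 < lam) (hp1 : p < 1) : ∃ R : ℝ, 0 ≤ R ∧ D.g * R ^ p + lam * ‖D.φ‖ ≤ R := by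
  have t1 := (tendsto_rpow_neg_atTop (y := 1 - p) (by linarith)).const_mul D.g
  rw [mul_zero] at t1
  obtain ⟨R, ⟨h1, h2⟩, h3⟩ := ((t1.eventually (gt_mem_nhds (by norm_num : (0:ℝ) < 1 / 2))).and
    (eventually_ge_atTop (2 * (lam * ‖D.φ‖)))).and (eventually_gt_atTop 0) |>.exists
  refine ⟨R, h3.le, ?_⟩
  have : R ^ p = R ^ (-(1 - p)) * R := by
    rw [← rpow_add_one h3.ne']; ring_nf
  rw [this]
  nlinarith

lemma it_conv (hl : 0 < lam) (hp1 : p < 1) {a : ℝ} (ha : 1 ≤ a) : ∃ L, Tendsto (D.it p hp lam a) atTop (𝓝 L) := by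
  obtain ⟨R, hR0, hR⟩ := D.exists_R hl hp1
  obtain ⟨S, hS, hGS⟩ := D.Gc (R ^ p)
  have a0 : 0 < a := by linarith
  have hc : Continuous fun h : C(X, ℝ) => a⁻¹ • (h + lam • D.φ) := by fun_prop
  obtain ⟨L, hL⟩ := mono_conv (fun n => D.it p hp lam a (n + 1))
    (fun m n h => D.it_mono hp hl a0 (by omega)) (hS.image hc)
    (fun n => ⟨_, hGS _ (pw_norm_le hp (D.it_nonneg hp hl a0 n) (D.it_norm hp hl hR0 hR ha n)), rfl⟩)
  exact ⟨L, (tendsto_add_atTop_iff_nat 1).1 hL⟩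

theorem fix_lt (hl : 0 < lam) (hp1 : p < 1) {d : ℝ} (hd : 0 < d) :
    ∃ u : C(X, ℝ), (∀ x, 0 ≤ u x) ∧
      (1 + d * D.Nm u ^ 2) • u = D.G (pw p hp u) + lam • D.φ := by
  have hex : ∀ a : ℝ, ∃ L, 1 ≤ a → Tendsto (D.it p hp lam a) atTop (𝓝 L) := by
    intro a
    by_cases ha : 1 ≤ a
    · obtain ⟨L, hL⟩ := D.it_conv hp hl hp1 ha
      exact ⟨L, fun _ => hL⟩
    · exact ⟨0, fun h => absurd h ha⟩
  choose u hu using hex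
  have hux : ∀ a, 1 ≤ a → ∀ x, Tendsto (fun n => D.it p hp lam a n x) atTop (𝓝 (u a x)) :=
    fun a ha x => ((continuous_eval_const x).tendsto (u a)).comp (hu a ha)
  have u0 : ∀ a, 1 ≤ a → ∀ x, 0 ≤ u a x := fun a ha x =>
    ge_of_tendsto' (hux a ha x) fun n => D.it_nonneg hp hl (by linarith) n x
  have ueq : ∀ a, 1 ≤ a → u a = a⁻¹ • (D.G (pw p hp (u a)) + lam • D.φ) := by
    intro a ha
    have h1 := (tendsto_add_atTop_iff_nat 1).2 (hu a ha)
    have hc : Continuous fun h : C(X, ℝ) => a⁻¹ • (D.G (pw p hp h) + lam • D.φ) := by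
      have := D.Gcont.comp (pw_cont (X := X) hp)
      exact (this.add continuous_const).const_smul a⁻¹
    exact tendsto_nhds_unique h1 ((hc.tendsto (u a)).comp (hu a ha))
  set F : ℝ → ℝ := fun a => D.Nm (u a) with hF
  set k := 1 / (1 - p) with hk
  have Fanti : ∀ a b, 1 ≤ a → a ≤ b → F b ≤ F a := by
    intro a b ha hab
    exact D.NmMono _ _ (u0 b (ha.trans hab)) fun x =>
      le_of_tendsto_of_tendsto' (hux b (ha.trans hab) x) (hux a ha x)
        fun n => D.it_anti hp hl (by linarith) hab n x
  have Fsc : ∀ a b, 1 ≤ a → a ≤ b → (a / b) ^ k * F a ≤ F b := by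
    intro a b ha hab
    have h0 : 0 ≤ (a / b) ^ k := rpow_nonneg (div_nonneg (by linarith) (by linarith)) _
    rw [hF]
    simp only
    rw [← D.NmHom _ _ h0]
    exact D.NmMono _ _ (fun x => mul_nonneg h0 (u0 a ha x)) fun x =>
      le_of_tendsto_of_tendsto' ((hux a ha x).const_mul _) (hux b (ha.trans hab) x)
        fun n => D.it_scale hp hl hp1 (by linarith) hab n x
  have F0 : ∀ a, 0 ≤ F a := fun a => D.Nm0 _
  have Fcont : ContinuousOn F (Ici 1) := by
    intro b hb
    have hb1 : 1 ≤ b := hb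
    have hr : Tendsto (fun a : ℝ => (b / a) ^ k) (𝓝[Ici 1] b) (𝓝 1) := by
      have h1 : ContinuousAt (fun a : ℝ => (b / a) ^ k) b := by
        refine ContinuousAt.rpow_const (continuousAt_const.div continuousAt_id (by simp; linarith))
          (Or.inl ?_)
        rw [div_self (by linarith)]; norm_num
      have h2 := h1.tendsto
      rw [div_self (by linarith), one_rpow] at h2
      exact h2.mono_left nhdsWithin_le_nhds
    have l1 : Tendsto (fun a : ℝ => min ((b / a) ^ k) 1 * F b) (𝓝[Ici 1] b) (𝓝 (F b)) := by
      simpa using (hr.min (tendsto_const_nhds (x := (1:ℝ)))).mul_const (F b)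
    have l2 : Tendsto (fun a : ℝ => max ((b / a) ^ k) 1 * F b) (𝓝[Ici 1] b) (𝓝 (F b)) := by
      simpa using (hr.max (tendsto_const_nhds (x := (1:ℝ)))).mul_const (F b)
    refine tendsto_of_tendsto_of_tendsto_of_le_of_le' l1 l2 ?_ ?_
    · filter_upwards [self_mem_nhdsWithin] with a ha
      rcases le_total a b with h | h
      · exact (mul_le_of_le_one_left (F0 b) (min_le_right _ _)).trans (Fanti a b ha h)
      · exact (mul_le_mul_of_nonneg_right (min_le_left _ _) (F0 b)).trans (Fsc b a hb1 h)
    · filter_upwards [self_mem_nhdsWithin] with a ha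
      have ha1 : 1 ≤ a := ha
      rcases le_total a b with h | h
      · refine le_trans ?_ (mul_le_mul_of_nonneg_right (le_max_left _ _) (F0 b))
        have h1 := Fsc a b ha h
        have h2 : (b / a) ^ k * (a / b) ^ k = 1 := by
          rw [← mul_rpow (by positivity) (by positivity)]
          rw [show b / a * (a / b) = 1 by field_simp, one_rpow]
        have h3 : 0 ≤ (b / a) ^ k := by positivity
        calc F a = (b / a) ^ k * ((a / b) ^ k * F a) := by rw [← mul_assoc, h2, one_mul]
          _ ≤ _ := mul_le_mul_of_nonneg_left h1 h3
      · exact (Fanti b a hb1 h).trans (le_mul_of_one_le_left (F0 b) (le_max_right _ _))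
  obtain ⟨a, ha, hae⟩ : ∃ a, 1 ≤ a ∧ a - 1 - d * F a ^ 2 = 0 := by
    have hA : (1:ℝ) ≤ 1 + d * F 1 ^ 2 := by nlinarith [sq_nonneg (F 1)]
    have hcont : ContinuousOn (fun a => a - 1 - d * F a ^ 2) (Icc 1 (1 + d * F 1 ^ 2)) := by
      have := Fcont.mono (show Icc 1 (1 + d * F 1 ^ 2) ⊆ Ici 1 from Icc_subset_Ici_self)
      fun_prop
    obtain ⟨a, ha, hae⟩ := intermediate_value_Icc hA hcont (show (0:ℝ) ∈ Icc _ _ from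
      ⟨by nlinarith [sq_nonneg (F 1)], by
        have h1 := Fanti 1 _ le_rfl hA
        have h2 := F0 (1 + d * F 1 ^ 2)
        have : F (1 + d * F 1 ^ 2) ^ 2 ≤ F 1 ^ 2 := by gcongr
        nlinarith⟩)
    exact ⟨a, ha.1, hae⟩
  refine ⟨u a, u0 a ha, ?_⟩
  have h1 : 1 + d * D.Nm (u a) ^ 2 = a := by
    have : F a = D.Nm (u a) := rfl
    rw [← this]; linarith
  rw [h1]
  conv_lhs => rw [ueq a ha]
  rw [smul_smul, mul_inv_cancel₀ (by linarith), one_smul]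

end AbsData
end Abs2

section Abs3
set_option linter.unusedSectionVars false
variable {X : Type*} [TopologicalSpace X] [CompactSpace X] (D : AbsData X)

lemma rpow_close {q R s : ℝ} (q0 : 0 < q) (q1 : q < 1) (hR : 1 ≤ R) (s0 : 0 ≤ s) (sR : s ≤ R) :
    |s ^ q - s| ≤ (1 - q) + (R - R ^ q) := by
  have hRq : R ^ q ≤ R := by
    simpa using rpow_le_rpow_of_exponent_le hR q1.le
  rcases le_total s 1 with h | h
  · have h1 : s ≤ s ^ q := by
      rcases s0.eq_or_lt with rfl | hs
      · rw [zero_rpow q0.ne']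
      · simpa using rpow_le_rpow_of_exponent_ge hs h q1.le
    have h2 := rpow_one_add_le_one_add_mul_self (s := s - 1) (by linarith) q0.le q1.le
    rw [add_sub_cancel] at h2
    rw [abs_of_nonneg (by linarith)]
    nlinarith
  · have hs : 0 < s := by linarith
    have h1 : s ^ q ≤ s := by simpa using rpow_le_rpow_of_exponent_le h q1.le
    rw [abs_of_nonpos (by linarith)]
    have e : ∀ t : ℝ, 0 < t → t = t ^ q * t ^ (1 - q) := fun t ht => by
      rw [← rpow_add ht]; simp
    have h2 : s ^ q ≤ R ^ q := rpow_le_rpow s0 sR q0.le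
    have h3 : s ^ (1 - q) ≤ R ^ (1 - q) := rpow_le_rpow s0 sR (by linarith)
    have h4 : 1 ≤ s ^ (1 - q) := one_le_rpow h (by linarith)
    have h5 : s ^ q * (s ^ (1 - q) - 1) ≤ R ^ q * (R ^ (1 - q) - 1) :=
      mul_le_mul h2 (by linarith) (by linarith) (by positivity)
    have e1 := e s hs
    have e2 := e R (by linarith)
    nlinarith

namespace AbsData

lemma one_bound {lam d : ℝ} (hl : 0 < lam) (hd : 0 < d) : ∃ R : ℝ, 1 ≤ R ∧
    ∀ (q : ℝ) (q0 : 0 < q), q < 1 → ∀ u : C(X, ℝ), (∀ x, 0 ≤ u x) →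
      (1 + d * D.Nm u ^ 2) • u = D.G (pw q q0 u) + lam • D.φ → ‖u‖ ≤ R := by
  obtain ⟨S, hS, hGS⟩ := D.Gc 1
  set K0 : Set C(X, ℝ) := (fun z : C(X, ℝ) × ℝ => z.1 + z.2 • D.φ) '' (S ×ˢ Icc 0 lam) with hK0
  have hK0c : IsCompact K0 := (hS.prod isCompact_Icc).image (by fun_prop)
  set K1 := K0 ∩ {v | ‖v‖ = 1} with hK1
  have hK1c : IsCompact K1 := hK0c.inter_right (isClosed_eq continuous_norm continuous_const)
  obtain ⟨δ, δ0, hδ⟩ : ∃ δ : ℝ, 0 < δ ∧ ∀ v ∈ K1, δ ≤ D.Nm v := by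
    rcases K1.eq_empty_or_nonempty with h | h
    · exact ⟨1, one_pos, fun v hv => by rw [h] at hv; exact absurd hv (notMem_empty _)⟩
    · obtain ⟨v, hv, hmin⟩ := hK1c.exists_isMinOn h D.Nmcont.continuousOn
      refine ⟨D.Nm v, lt_of_le_of_ne (D.Nm0 v) fun h0 => ?_, fun w hw => hmin hw⟩
      have h1 := D.NmZero v h0.symm
      have h2 : ‖v‖ = 1 := hv.2
      rw [h1, norm_zero] at h2
      norm_num at h2
  have B0 : 0 ≤ D.g + lam * ‖D.φ‖ := by have := D.g0; positivity
  refine ⟨1 + (D.g + lam * ‖D.φ‖) / (d * δ ^ 2), by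
    have : 0 ≤ (D.g + lam * ‖D.φ‖) / (d * δ ^ 2) := by positivity
    linarith, ?_⟩
  intro q q0 q1 u hu heq
  by_cases hM : ‖u‖ ≤ 1
  · have : 0 ≤ (D.g + lam * ‖D.φ‖) / (d * δ ^ 2) := by positivity
    linarith
  push Not at hM
  set M := ‖u‖ with hMdef
  have M0 : 0 < M := by linarith
  set a := 1 + d * D.Nm u ^ 2 with ha
  have a1 : 1 ≤ a := by nlinarith [sq_nonneg (D.Nm u)]
  have a0 : 0 < a := by linarith
  have hMq : M ^ q ≤ M := by simpa using rpow_le_rpow_of_exponent_le hM.le q1.le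
  have hpw := pw_norm_le q0 hu (le_refl ‖u‖)
  rw [← hMdef] at hpw
  have haB : a ≤ D.g + lam * ‖D.φ‖ := by
    have h1 : ‖a • u‖ = a * M := by rw [norm_smul, Real.norm_of_nonneg a0.le]
    rw [heq] at h1
    have h2 := norm_add_le (D.G (pw q q0 u)) (lam • D.φ)
    rw [norm_smul, Real.norm_of_nonneg hl.le] at h2
    have h3 := (D.Gb (pw q q0 u)).trans (mul_le_mul_of_nonneg_left (hpw.trans hMq) D.g0)
    have h4 : lam * ‖D.φ‖ ≤ lam * ‖D.φ‖ * M := le_mul_of_one_le_right (by positivity) hM.le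
    have h5 : a * M ≤ (D.g + lam * ‖D.φ‖) * M := by linarith
    exact le_of_mul_le_mul_right h5 M0
  have Ma : 1 ≤ M * a := by nlinarith
  have hv : M⁻¹ • u ∈ K1 := by
    refine ⟨⟨(D.G ((M * a)⁻¹ • pw q q0 u), (M * a)⁻¹ * lam), ⟨hGS _ ?_, by positivity, ?_⟩, ?_⟩, ?_⟩
    · rw [norm_smul, Real.norm_of_nonneg (by positivity), inv_mul_le_iff₀ (by positivity)]
      nlinarith
    · exact mul_le_of_le_one_left hl.le (inv_le_one_of_one_le₀ Ma)
    · simp only [map_smul]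
      rw [← smul_smul, ← smul_add, ← heq, smul_smul]
      congr 1
      field_simp
    · change ‖M⁻¹ • u‖ = 1
      rw [norm_smul, Real.norm_of_nonneg (by positivity), ← hMdef, inv_mul_cancel₀ M0.ne']
  have h1 := hδ _ hv
  rw [D.NmHom _ _ (by positivity), inv_mul_eq_div, le_div_iff₀ M0] at h1
  have h2 : d * (δ * M) ^ 2 ≤ d * D.Nm u ^ 2 := by gcongr
  have h3 : M ≤ (D.g + lam * ‖D.φ‖) / (d * δ ^ 2) := by
    rw [le_div_iff₀ (by positivity)]
    have : M * (d * δ ^ 2) ≤ M * (d * δ ^ 2) * M := le_mul_of_one_le_right (by positivity) hM.le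
    nlinarith
  linarith

theorem fix_one {lam d : ℝ} (hl : 0 < lam) (hd : 0 < d) :
    ∃ u : C(X, ℝ), (∀ x, 0 ≤ u x) ∧
      (1 + d * D.Nm u ^ 2) • u = D.G (pw 1 one_pos u) + lam • D.φ := by
  obtain ⟨R, hR1, hR⟩ := D.one_bound hl hd
  set q : ℕ → ℝ := fun n => 1 - 1 / ((n : ℝ) + 2) with hq
  have q0 : ∀ n, 0 < q n := fun n => by
    simp only [hq]
    have : 1 / ((n : ℝ) + 2) < 1 := by
      rw [div_lt_one (by positivity)]
      have : (0:ℝ) ≤ n := n.cast_nonneg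
      linarith
    linarith
  have q1 : ∀ n, q n < 1 := fun n => by
    simp only [hq]
    have : 0 < 1 / ((n : ℝ) + 2) := by positivity
    linarith
  have hqt : Tendsto q atTop (𝓝 1) := by
    have h1 : Tendsto (fun n : ℕ => 1 / ((n : ℝ) + 2)) atTop (𝓝 0) := by
      have : Tendsto (fun n : ℕ => (n : ℝ) + 2) atTop atTop :=
        tendsto_atTop_add_const_right _ _ tendsto_natCast_atTop_atTop
      simp only [one_div]
      exact this.inv_tendsto_atTop
    simpa [hq] using h1.const_sub 1
  choose u u0 ueq using fun n => D.fix_lt (q0 n) hl (q1 n) hd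
  have ub : ∀ n, ‖u n‖ ≤ R := fun n => hR _ (q0 n) (q1 n) _ (u0 n) (ueq n)
  obtain ⟨S, hS, hGS⟩ := D.Gc R
  set K : Set C(X, ℝ) := (fun z : ℝ × C(X, ℝ) => z.1 • (z.2 + lam • D.φ)) '' (Icc 0 1 ×ˢ S) with hK
  have hKc : IsCompact K := (isCompact_Icc.prod hS).image (by fun_prop)
  have pb : ∀ n, ‖pw (q n) (q0 n) (u n)‖ ≤ R := fun n =>
    (pw_norm_le (q0 n) (u0 n) (ub n)).trans (by
      simpa using rpow_le_rpow_of_exponent_le hR1 (q1 n).le)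
  have uK : ∀ n, u n ∈ K := by
    intro n
    have a1 : 1 ≤ 1 + d * D.Nm (u n) ^ 2 := by nlinarith [sq_nonneg (D.Nm (u n))]
    refine ⟨((1 + d * D.Nm (u n) ^ 2)⁻¹, D.G (pw (q n) (q0 n) (u n))),
      ⟨⟨by positivity, inv_le_one_of_one_le₀ a1⟩, hGS _ (pb n)⟩, ?_⟩
    simp only
    rw [← ueq n, smul_smul, inv_mul_cancel₀ (by linarith), one_smul]
  obtain ⟨L, -, ψ, hψ, hL⟩ := hKc.tendsto_subseq uK
  have hpt : Tendsto (fun n => pw (q n) (q0 n) (u n) - u n) atTop (𝓝 0) := by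
    have hb : Tendsto (fun n => (1 - q n) + (R - R ^ q n)) atTop (𝓝 0) := by
      have h1 : Tendsto (fun n => R ^ q n) atTop (𝓝 (R ^ (1:ℝ))) :=
        ((Real.continuous_const_rpow (by linarith)).tendsto 1).comp hqt
      rw [rpow_one] at h1
      simpa using (hqt.const_sub 1).add (h1.const_sub R)
    refine squeeze_zero_norm (fun n => ?_) hb
    have h0 : 0 ≤ (1 - q n) + (R - R ^ q n) :=
      (abs_nonneg _).trans (rpow_close (q0 n) (q1 n) hR1 zero_le_one hR1)
    rw [ContinuousMap.norm_le _ h0]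
    intro x
    exact rpow_close (q0 n) (q1 n) hR1 (u0 n x)
      ((le_abs_self _).trans (((u n).norm_coe_le_norm x).trans (ub n)))
  have hpL : Tendsto (fun n => pw (q (ψ n)) (q0 (ψ n)) (u (ψ n))) atTop (𝓝 L) := by
    have := (hpt.comp hψ.tendsto_atTop).add hL
    simpa [Function.comp_def] using this
  refine ⟨L, fun x => ge_of_tendsto' (((continuous_eval_const x).tendsto L).comp hL)
    (fun n => u0 _ x), ?_⟩
  have e : pw 1 one_pos L = L := by ext x; exact rpow_one _
  rw [e]
  have t1 : Tendsto (fun n => (1 + d * D.Nm (u (ψ n)) ^ 2) • u (ψ n)) atTop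
      (𝓝 ((1 + d * D.Nm L ^ 2) • L)) := by
    have hN := (D.Nmcont.tendsto L).comp hL
    exact (((hN.pow 2).const_mul d).const_add 1).smul hL
  have t2 : Tendsto (fun n => D.G (pw (q (ψ n)) (q0 (ψ n)) (u (ψ n))) + lam • D.φ) atTop
      (𝓝 (D.G L + lam • D.φ)) := ((D.Gcont.tendsto L).comp hpL).add tendsto_const_nhds
  refine tendsto_nhds_unique t1 (t2.congr fun n => (ueq _).symm)

theorem fix_all {p d : ℝ} (hp : 0 < p) (hd : 0 < d) : ∃ lf : ℝ, 0 < lf ∧ ∀ lam, 0 < lam → lam < lf →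
    ∃ u : C(X, ℝ), (∀ x, 0 ≤ u x) ∧
      (1 + d * D.Nm u ^ 2) • u = D.G (pw p hp u) + lam • D.φ := by
  rcases lt_trichotomy p 1 with h | h | h
  · exact ⟨1, one_pos, fun lam hl _ => D.fix_lt hp hl h hd⟩
  · subst h
    exact ⟨1, one_pos, fun lam hl _ => D.fix_one hl hd⟩
  · exact D.fix_gt h hd

end AbsData
end Abs3

section Oper
set_option linter.unusedSectionVars false
variable {N : ℕ} {Ω : Set (RN N)}

open Classical in
/-- extension by zero -/
def extz (u : C(closure Ω, ℝ)) (x : RN N) : ℝ := if hx : x ∈ closure Ω then u ⟨x, hx⟩ else 0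

lemma extz_mem (u : C(closure Ω, ℝ)) {x : RN N} (hx : x ∈ closure Ω) : extz u x = u ⟨x, hx⟩ :=
  dif_pos hx

lemma extz_coe (u : C(closure Ω, ℝ)) (x : closure Ω) : extz u x = u x := extz_mem u x.2

lemma extz_not (u : C(closure Ω, ℝ)) {x : RN N} (hx : x ∉ closure Ω) : extz u x = 0 :=
  dif_neg hx

lemma extz_contOn (u : C(closure Ω, ℝ)) : ContinuousOn (extz u) (closure Ω) := by
  rw [continuousOn_iff_continuous_domRestrict]
  have : (closure Ω).domRestrict (extz u) = u := by
    ext x; exact extz_coe u x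
  rw [this]
  exact u.continuous

lemma extz_meas (u : C(closure Ω, ℝ)) : AEStronglyMeasurable (extz u) := by
  have e : extz u = (closure Ω).indicator (extz u) := by
    ext x
    by_cases hx : x ∈ closure Ω
    · simp [hx]
    · rw [indicator_of_notMem hx, extz_not u hx]
  rw [e, aestronglyMeasurable_indicator_iff isClosed_closure.measurableSet]
  exact (extz_contOn u).aestronglyMeasurable isClosed_closure.measurableSet

lemma extz_comb (a b : ℝ) (u v : C(closure Ω, ℝ)) :
    extz (a • u + b • v) = fun x => a * extz u x + b * extz v x := by
  ext x
  by_cases hx : x ∈ closure Ω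
  · simp [extz_mem _ hx]
  · simp [extz_not _ hx]

variable [CompactSpace (closure Ω)]

lemma extz_bdd (u : C(closure Ω, ℝ)) (x : RN N) : |extz u x| ≤ ‖u‖ := by
  by_cases hx : x ∈ closure Ω
  · rw [extz_mem u hx]; exact u.norm_coe_le_norm _
  · rw [extz_not u hx]; simp

lemma extz_locInt (u : C(closure Ω, ℝ)) : LocallyIntegrable (extz u) :=
  locInt_of_bdd (extz_meas u) (extz_bdd u)

lemma extz_nonneg {u : C(closure Ω, ℝ)} (hu : ∀ x, 0 ≤ u x) (x : RN N) : 0 ≤ extz u x := by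
  by_cases hx : x ∈ closure Ω
  · rw [extz_mem u hx]; exact hu _
  · rw [extz_not u hx]

lemma nm_le (hb : Bornology.IsBounded Ω) : ∃ C : ℝ, 0 ≤ C ∧ ∀ u : C(closure Ω, ℝ),
    eLpNorm (extz u) 2 (volume.restrict Ω) ≠ ⊤ ∧ LpNorm Ω 2 (extz u) ≤ C * ‖u‖ := by
  have hvol : volume Ω ≠ ⊤ := hb.measure_lt_top.ne
  have hc : (volume Ω) ^ ((2:ℝ≥0∞).toReal⁻¹) ≠ ⊤ := ENNReal.rpow_ne_top_of_nonneg (by simp) hvol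
  refine ⟨((volume Ω) ^ ((2:ℝ≥0∞).toReal⁻¹)).toReal, ENNReal.toReal_nonneg, fun u => ?_⟩
  have h := eLpNorm_le_of_ae_bound (p := 2) (μ := volume.restrict Ω) (f := extz u) (C := ‖u‖)
    (Eventually.of_forall fun x => extz_bdd u x)
  rw [Measure.restrict_apply_univ] at h
  refine ⟨ne_top_of_le_ne_top (ENNReal.mul_ne_top hc ENNReal.ofReal_ne_top) h, ?_⟩
  have := ENNReal.toReal_mono (ENNReal.mul_ne_top hc ENNReal.ofReal_ne_top) h
  rw [ENNReal.toReal_mul, ENNReal.toReal_ofReal (norm_nonneg _)] at this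
  exact this

lemma nm_add (hb : Bornology.IsBounded Ω) (u v : C(closure Ω, ℝ)) :
    LpNorm Ω 2 (extz (u + v)) ≤ LpNorm Ω 2 (extz u) + LpNorm Ω 2 (extz v) := by
  obtain ⟨C, -, hC⟩ := nm_le hb
  have e : extz (u + v) = extz u + extz v := by
    have := extz_comb 1 1 u v
    ext x
    simpa using congrFun this x
  have h := eLpNorm_add_le (p := 2) (μ := volume.restrict Ω) (extz_meas u).restrict
    (extz_meas v).restrict (by norm_num)
  rw [← e] at h
  have := ENNReal.toReal_mono (ENNReal.add_ne_top.2 ⟨(hC u).1, (hC v).1⟩) h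
  rw [ENNReal.toReal_add (hC u).1 (hC v).1] at this
  exact this

lemma nm_smul (c : ℝ) (u : C(closure Ω, ℝ)) :
    LpNorm Ω 2 (extz (c • u)) = |c| * LpNorm Ω 2 (extz u) := by
  have e : extz (c • u) = c • extz u := by
    have := extz_comb c 0 u 0
    ext x
    simpa using congrFun this x
  rw [LpNorm, LpNorm, e, eLpNorm_const_smul, ENNReal.toReal_mul]
  simp

lemma nm_lip (hb : Bornology.IsBounded Ω) : ∃ C : ℝ, 0 ≤ C ∧ ∀ u v : C(closure Ω, ℝ),
    |LpNorm Ω 2 (extz u) - LpNorm Ω 2 (extz v)| ≤ C * ‖u - v‖ := by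
  obtain ⟨C, C0, hC⟩ := nm_le hb
  refine ⟨C, C0, fun u v => ?_⟩
  have h1 := nm_add hb (u - v) v
  have h2 := nm_add hb (v - u) u
  rw [sub_add_cancel] at h1 h2
  have h3 := (hC (u - v)).2
  have h4 := (hC (v - u)).2
  rw [norm_sub_rev] at h4
  rw [abs_le]
  constructor <;> linarith

lemma nm_mono (hb : Bornology.IsBounded Ω) (u v : C(closure Ω, ℝ)) (hu : ∀ x, 0 ≤ u x)
    (h : ∀ x, u x ≤ v x) : LpNorm Ω 2 (extz u) ≤ LpNorm Ω 2 (extz v) := by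
  obtain ⟨C, -, hC⟩ := nm_le hb
  refine ENNReal.toReal_mono (hC v).1 (eLpNorm_mono fun x => ?_)
  have hv : ∀ x, 0 ≤ v x := fun x => (hu x).trans (h x)
  rw [Real.norm_of_nonneg (extz_nonneg hu x), Real.norm_of_nonneg (extz_nonneg hv x)]
  by_cases hx : x ∈ closure Ω
  · rw [extz_mem _ hx, extz_mem _ hx]; exact h _
  · rw [extz_not _ hx, extz_not _ hx]

lemma nm_zero (hΩ : IsOpen Ω) (hb : Bornology.IsBounded Ω) (u : C(closure Ω, ℝ))
    (h : LpNorm Ω 2 (extz u) = 0) : u = 0 := by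
  obtain ⟨C, -, hC⟩ := nm_le hb
  have h1 : eLpNorm (extz u) 2 (volume.restrict Ω) = 0 :=
    ((ENNReal.toReal_eq_zero_iff _).1 h).resolve_right (hC u).1
  rw [eLpNorm_eq_zero_iff (extz_meas u).restrict (by norm_num)] at h1
  have h2 : EqOn (extz u) 0 Ω := Measure.eqOn_open_of_ae_eq h1 hΩ
    ((extz_contOn u).mono subset_closure) continuousOn_const
  have h3 : EqOn (extz u) 0 (closure Ω) :=
    h2.of_subset_closure (extz_contOn u) continuousOn_const subset_closure le_rfl
  ext x
  rw [← extz_coe]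
  exact h3 x.2

lemma torsion_nonneg {ξ : RN N → ℝ} (hΩ : IsOpen Ω) (hξ : IsTorsionFn Ω ξ) :
    ∀ x ∈ closure Ω, 0 ≤ ξ x := by
  intro x hx
  by_cases h : x ∈ Ω
  · exact hξ.2.2.1 x h
  · rw [hξ.2.2.2.2 x (by rw [hΩ.frontier_eq]; exact ⟨hx, h⟩)]

theorem exists_data (hN : 1 ≤ N) (hΩ : IsOpen Ω) (hc : IsConnected Ω)
    (hb : Bornology.IsBounded Ω) {ξ : RN N → ℝ} (hξ : IsTorsionFn Ω ξ)
    (φ : C(closure Ω, ℝ)) (hφ : ∀ x, 0 ≤ φ x) :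
    ∃ D : AbsData (closure Ω), D.φ = φ ∧ (∀ u, D.Nm u = LpNorm Ω 2 (extz u)) ∧
      ∀ u, ∃ v, Sol Ω v (extz u) ∧ ContDiffOn ℝ 1 v Ω ∧
        (ContDiffOn ℝ 1 (extz u) Ω → ContDiffOn ℝ 2 v Ω) ∧ ∀ x : closure Ω, D.G u x = v x := by
  obtain ⟨Cn, Cn0, hsol⟩ := exists_sol hN hΩ hb hξ
  choose V hV1 hV2 hV3 hV4 hV5 using fun u : C(closure Ω, ℝ) =>
    hsol ‖u‖ (extz u) (extz_meas u) (extz_bdd u)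
  have hξ0 := torsion_nonneg hΩ hξ
  have hξb : ∃ g : ℝ, 0 ≤ g ∧ ∀ x ∈ closure Ω, ξ x ≤ g := by
    obtain ⟨B, hB⟩ := hb.isCompact_closure.exists_bound_of_continuousOn hξ.1
    exact ⟨max B 0, le_max_right _ _, fun x hx =>
      (le_abs_self _).trans ((hB x hx).trans (le_max_left _ _))⟩
  obtain ⟨g, g0, hg⟩ := hξb
  obtain ⟨C, C0, hC⟩ := nm_lip hb
  have Vcomb : ∀ (a b : ℝ) (u v : C(closure Ω, ℝ)), V (a • u + b • v) =
      fun x => a * V u x + b * V v x := by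
    intro a b u v
    refine Sol.unique hN hΩ hc hb (hV1 (a • u + b • v)) ?_ (extz_locInt _)
    rw [extz_comb]
    exact (hV1 u).comb hΩ hb (extz_locInt u) (extz_locInt v) (hV1 v) a b
  let G : C(closure Ω, ℝ) →ₗ[ℝ] C(closure Ω, ℝ) :=
    { toFun := fun u => ⟨fun x => V u x, (hV1 u).cont.domRestrict⟩
      map_add' := fun u v => by
        ext x
        have := congrFun (Vcomb 1 1 u v) x
        simp only [one_smul, one_mul] at this
        exact this
      map_smul' := fun c u => by
        ext x
        have := congrFun (Vcomb c 0 u 0) x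
        simp only [zero_smul, add_zero, zero_mul] at this
        exact this }
  have hG : ∀ u (x : closure Ω), G u x = V u x := fun u x => rfl
  have Gb : ∀ u, ‖G u‖ ≤ g * ‖u‖ := by
    intro u
    rw [ContinuousMap.norm_le _ (by positivity)]
    intro x
    rw [hG, Real.norm_eq_abs]
    refine (hV2 u x x.2).trans ?_
    rw [mul_comm]
    exact mul_le_mul_of_nonneg_right (hg x x.2) (norm_nonneg _)
  have Gc : ∀ M : ℝ, ∃ S : Set C(closure Ω, ℝ), IsCompact S ∧ ∀ h, ‖h‖ ≤ M → G h ∈ S := by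
    intro M
    let E := ContinuousMap.isometryEquivBoundedOfCompact (closure Ω) ℝ
    let A : Set (BoundedContinuousFunction (closure Ω) ℝ) := (fun h => E (G h)) '' {h | ‖h‖ ≤ M}
    have hA : IsCompact (closure A) := by
      refine BoundedContinuousFunction.arzela_ascoli (Metric.closedBall 0 (g * M))
        (isCompact_closedBall _ _) A ?_ ?_
      · rintro _ x ⟨h, hh, rfl⟩
        rw [mem_closedBall_zero_iff]
        exact ((G h).norm_coe_le_norm x).trans ((Gb h).trans (mul_le_mul_of_nonneg_left hh g0))
      · intro x0
        by_cases hx0 : (x0 : RN N) ∈ Ω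
        · obtain ⟨n, hn⟩ := exists_dyadic hΩ hx0
          refine Metric.equicontinuousAt_of_continuity_modulus
            (fun x : closure Ω => Cn n * M * ‖(x0 : RN N) - x‖) ?_ _ ?_
          · have : Continuous fun x : closure Ω => Cn n * M * ‖(x0 : RN N) - x‖ := by fun_prop
            have h2 := this.tendsto x0
            simpa using h2
          · have hnb : ∀ᶠ x : closure Ω in 𝓝 x0, (x : RN N) ∈ Metric.ball (x0 : RN N) ((1 / 2) ^ n) :=
              continuous_subtype_val.continuousAt.eventually
                (Metric.ball_mem_nhds _ (by positivity))
            filter_upwards [hnb] with x hx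
            rintro ⟨_, h, hh, rfl⟩
            have h1 := hV5 h n x0 hn x0 (Metric.mem_ball_self (by positivity)) x hx
            refine le_trans h1 ?_
            have := Cn0 n
            have hh' : ‖h‖ ≤ M := hh
            gcongr
        · have hfr : ξ x0 = 0 := hξ.2.2.2.2 x0 (by rw [hΩ.frontier_eq]; exact ⟨x0.2, hx0⟩)
          refine Metric.equicontinuousAt_of_continuity_modulus
            (fun x : closure Ω => M * ξ x) ?_ _ ?_
          · have : Continuous fun x : closure Ω => M * ξ x :=
              continuous_const.mul hξ.1.domRestrict
            have h2 := this.tendsto x0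
            simpa [hfr] using h2
          · refine Eventually.of_forall fun x => ?_
            rintro ⟨_, h, hh, rfl⟩
            change |V h x0 - V h x| ≤ _
            rw [(hV1 h).off x0 hx0, zero_sub, abs_neg]
            exact (hV2 h x x.2).trans (mul_le_mul_of_nonneg_right hh (hξ0 x x.2))
    refine ⟨E.symm '' closure A, hA.image E.symm.continuous, fun h hh => ?_⟩
    exact ⟨E (G h), subset_closure ⟨h, hh, rfl⟩, E.symm_apply_apply _⟩
  let D : AbsData (closure Ω) :=
    { G := G
      Gpos := fun h h0 x => Sol.nonneg hN hΩ hc hb (hV1 h) (extz_locInt h) (extz_bdd h)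
        (extz_nonneg h0) x
      g := g
      g0 := g0
      Gb := Gb
      Gc := Gc
      φ := φ
      φ0 := hφ
      Nm := fun u => LpNorm Ω 2 (extz u)
      Nm0 := fun u => ENNReal.toReal_nonneg
      C := C
      C0 := C0
      NmLip := hC
      NmHom := fun c u h => by rw [nm_smul, abs_of_nonneg h]
      NmMono := fun u v => nm_mono hb u v
      NmZero := fun u => nm_zero hΩ hb u }
  exact ⟨D, rfl, fun u => rfl, fun u => ⟨V u, hV1 u, hV3 u, hV4 u, fun x => rfl⟩⟩

end Oper

/-- Theorem 2.1: for small `λ > 0`, the inhomogeneous Carrier problem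
`-(1 + d‖u‖₂²) Δu = u^p + λ f`, `u > 0` in `Ω`, `u = 0` on `∂Ω`, has a classical solution. -/
theorem stmt_3 {N : ℕ} (hN : 1 ≤ N) (Ω : Set (EuclideanSpace ℝ (Fin N)))
    (hΩo : IsOpen Ω) (hΩconn : IsConnected Ω) (hΩbd : Bornology.IsBounded Ω)
    (d p : ℝ) (hd : 0 < d) (hp : 0 < p)
    (f : EuclideanSpace ℝ (Fin N) → ℝ)
    (hf1 : ContDiffOn ℝ 1 f Ω) (hfc : ContinuousOn f (closure Ω))
    (hfne : ¬ (∀ x ∈ Ω, f x = 0))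
    -- the problem -Δφ = f, φ ≥ 0 in Ω, φ = 0 on ∂Ω has a classical solution
    (φ : EuclideanSpace ℝ (Fin N) → ℝ)
    (hφc : ContinuousOn φ (closure Ω)) (hφ2 : ContDiffOn ℝ 2 φ Ω)
    (hφeq : ∀ x ∈ Ω, -lapl φ x = f x) (hφnn : ∀ x ∈ Ω, 0 ≤ φ x)
    (hφbd : ∀ x ∈ frontier Ω, φ x = 0)
    -- Ω admits a torsion function
    (ξ : EuclideanSpace ℝ (Fin N) → ℝ) (hξ : IsTorsionFn Ω ξ) :
    ∃ lf : ℝ, 0 < lf ∧ ∀ lam : ℝ, 0 < lam → lam < lf →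
      ∃ u : EuclideanSpace ℝ (Fin N) → ℝ,
        ContinuousOn u (closure Ω) ∧ ContDiffOn ℝ 2 u Ω ∧
        (∀ x ∈ Ω, (-(1 + d * (LpNorm Ω 2 u) ^ 2)) * lapl u x = u x ^ p + lam * f x) ∧
        (∀ x ∈ Ω, 0 < u x) ∧
        (∀ x ∈ frontier Ω, u x = 0) := by
  have hcs : CompactSpace (closure Ω) := isCompact_iff_compactSpace.1 hΩbd.isCompact_closure
  have hφ0 : ∀ x ∈ closure Ω, 0 ≤ φ x := by
    intro x hx
    by_cases h : x ∈ Ω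
    · exact hφnn x h
    · rw [hφbd x (by rw [hΩo.frontier_eq]; exact ⟨hx, h⟩)]
  obtain ⟨D, hDφ, hDN, hDG⟩ := exists_data hN hΩo hΩconn hΩbd hξ
    (⟨fun x => φ x, hφc.domRestrict⟩ : C(closure Ω, ℝ)) (fun x => hφ0 x x.2)
  obtain ⟨lf, hlf, hfix⟩ := D.fix_all hp hd
  refine ⟨lf, hlf, fun lam l0 l1 => ?_⟩
  obtain ⟨u, u0, ueq⟩ := hfix lam l0 l1
  obtain ⟨w, hw, hw1, hw2, hGw⟩ := hDG (pw p hp u)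
  rw [hDφ, hDN] at ueq
  set A := 1 + d * LpNorm Ω 2 (extz u) ^ 2 with hA
  have A0 : 0 < A := by positivity
  have hpt : ∀ x ∈ closure Ω, A * extz u x = w x + lam * φ x := by
    intro x hx
    have h1 := DFunLike.congr_fun ueq ⟨x, hx⟩
    rw [extz_mem u hx]
    have h2 := hGw ⟨x, hx⟩
    simp only at h2
    rw [← h2]
    exact h1
  have hext : ∀ x, extz (pw p hp u) x = extz u x ^ p := by
    intro x
    by_cases hx : x ∈ closure Ω
    · rw [extz_mem _ hx, extz_mem _ hx]; rfl
    · rw [extz_not _ hx, extz_not _ hx, zero_rpow hp.ne']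
  have pn := extz_nonneg (pw_nonneg hp u0)
  have wnn : ∀ x, 0 ≤ w x := Sol.nonneg hN hΩo hΩconn hΩbd hw (extz_locInt _) (extz_bdd _) pn
  have pc : ContinuousOn (extz (pw p hp u)) Ω := (extz_contOn _).mono subset_closure
  have wpos : ∀ x ∈ Ω, 0 < w x := by
    intro x0 hx0
    refine lt_of_le_of_ne (wnn x0) fun h0 => hfne ?_
    have hz := strong_min hN hΩo hΩconn.isPreconnected hw.weak (hw.locInt hΩo hΩbd)
      (extz_locInt _) (extz_bdd _) (hw.cont.mono subset_closure) pn (fun x _ => wnn x) hx0 h0.symm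
    have hc2 : ContDiffOn ℝ 2 w Ω := (contDiffOn_const (c := (0:ℝ))).congr hz
    have hcl := classical_of_weak hΩo hc2 hw.weak pc
    have z1 : ∀ (v : EuclideanSpace ℝ (Fin N) → ℝ), (∀ x ∈ Ω, v x = 0) → ∀ x ∈ Ω, lapl v x = 0 := by
      intro v hv x hx
      have h1 : v =ᶠ[𝓝 x] fun _ => (0:ℝ) := by
        filter_upwards [hΩo.mem_nhds hx] with y hy
        exact hv y hy
      rw [lapl_congr h1]
      simp [lapl]
    have hφz : ∀ x ∈ Ω, φ x = 0 := by
      intro x hx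
      have h1 := hcl x hx
      rw [z1 w hz x hx, hext, neg_zero] at h1
      have h2 : extz u x = 0 := by
        rcases (extz_nonneg u0 x).eq_or_lt with h | h
        · exact h.symm
        · exact absurd h1 (rpow_pos_of_pos h p).ne
      have h3 := hpt x (subset_closure hx)
      rw [h2, hz x hx, mul_zero, zero_add] at h3
      rcases mul_eq_zero.1 h3.symm with h | h
      · exact absurd h l0.ne'
      · exact h
    intro x hx
    rw [← hφeq x hx, z1 φ hφz x hx, neg_zero]
  have upos : ∀ x ∈ Ω, 0 < extz u x := by
    intro x hx
    have h1 := hpt x (subset_closure hx)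
    have h2 : 0 < A * extz u x := by
      rw [h1]
      have := wpos x hx
      have := mul_nonneg l0.le (hφnn x hx)
      linarith
    exact pos_of_mul_pos_right h2 A0.le
  have ueqΩ : ∀ x ∈ Ω, extz u x = A⁻¹ * w x + A⁻¹ * lam * φ x := by
    intro x hx
    have h1 := hpt x (subset_closure hx)
    field_simp
    linarith
  have uC1 : ContDiffOn ℝ 1 (extz u) Ω :=
    ((contDiffOn_const.mul hw1).add
      (contDiffOn_const.mul (hφ2.of_le (by norm_num)))).congr ueqΩ
  have pC1 : ContDiffOn ℝ 1 (extz (pw p hp u)) Ω :=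
    (uC1.rpow_const_of_ne (p := p) fun x hx => (upos x hx).ne').congr fun x _ => hext x
  have wC2 := hw2 pC1
  have hcl := classical_of_weak hΩo wC2 hw.weak pc
  refine ⟨extz u, extz_contOn u, ?_, ?_, upos, ?_⟩
  · exact ((contDiffOn_const.mul wC2).add (contDiffOn_const.mul hφ2)).congr ueqΩ
  · intro x hx
    have hn := hΩo.mem_nhds hx
    have e : extz u =ᶠ[𝓝 x] fun y => A⁻¹ * w y + A⁻¹ * lam * φ y := by
      filter_upwards [hn] with y hy
      exact ueqΩ y hy
    have cw := wC2.contDiffAt hn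
    have cφ := hφ2.contDiffAt hn
    rw [lapl_congr e, lapl_add (contDiffAt_const.mul cw) (contDiffAt_const.mul cφ),
      lapl_const_mul cw, lapl_const_mul cφ, ← hext, ← hcl x hx, ← hφeq x hx]
    field_simp
    ring
  · intro x hx
    have hx' := hx
    rw [hΩo.frontier_eq] at hx'
    have h1 := hpt x hx'.1
    rw [hw.off x hx'.2, hφbd x hx, mul_zero, add_zero] at h1
    exact (mul_eq_zero.1 h1).resolve_left A0.ne'
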